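/- Assume: (i) m¹ is a reversible measure for q; (ii) γ/π is irrational; (iii) there exists a probability measure μ on E* which is ergodic for Q and which is not mutually singular with m². If m¹ is an ergodic measure for q, then m² is an ergodic measure for Q. -/

import Mathlib

open MeasureTheory ProbabilityTheory Set Pointwise
open scoped ENNReal

noncomputable section

/-- The increasing affine map from `(-1,1)` onto the chord `E_u`. -/
def ellMap (γ u x : ℝ) : ℝ := -u * Real.cos γ + x * Real.sqrt (1 - u ^ 2 * Real.sin γ ^ 2)

/-- The inverse of `ellMap γ u`. -/
def ellInv (γ u y : ℝ) : ℝ := (y + u * Real.cos γ) / Real.sqrt (1 - u ^ 2 * Real.sin γ ^ 2)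

/-- The open elliptical region `E`. -/
def Eset (γ : ℝ) : Set (ℝ × ℝ) :=
  {p | p.1 ^ 2 + 2 * Real.cos γ * p.1 * p.2 + p.2 ^ 2 < 1}

/-- The state space `E* = E × {−1,1}`, realized inside `ℝ × ℝ × ℝ`. -/
def EstarSet (γ : ℝ) : Set (ℝ × ℝ × ℝ) :=
  {w | (w.1, w.2.1) ∈ Eset γ ∧ (w.2.2 = 1 ∨ w.2.2 = -1)}

/-- Uniform probability measure on `(-1,1)`. -/
def m1 : Measure ℝ := (2 : ℝ≥0∞)⁻¹ • volume.restrict (Ioo (-1 : ℝ) 1)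

/-- The probability measure `m²` on `E*`: normalized Lebesgue measure on `E` times
uniform measure on `{−1,1}`. -/
def m2 (γ : ℝ) : Measure (ℝ × ℝ × ℝ) :=
  ((((volume (Eset γ))⁻¹ • volume.restrict (Eset γ)).prod
      ((2 : ℝ≥0∞)⁻¹ • (Measure.dirac (1 : ℝ) + Measure.dirac (-1 : ℝ)))).map
    fun p => (p.1.1, p.1.2, p.2))

/-- `q` is a Markov kernel on `(-1,1)`. -/
def IsMarkovOnInterval (q : Kernel ℝ ℝ) : Prop :=
  IsMarkovKernel q ∧ ∀ x ∈ Ioo (-1 : ℝ) 1, q x (Ioo (-1 : ℝ) 1) = 1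

/-- The kernel `Q` of the alternating random walk, as a measure-valued function on the
state space. -/
def Qfun (γ : ℝ) (q : Kernel ℝ ℝ) : ℝ × ℝ × ℝ → Measure (ℝ × ℝ × ℝ) := fun w =>
  if w.2.2 = -1 then
    Measure.map (fun x => (ellMap γ w.2.1 x, w.2.1, (1 : ℝ))) (q (-ellInv γ w.2.1 w.1))
  else
    Measure.map (fun x => (w.1, ellMap γ w.1 x, (-1 : ℝ))) (q (-ellInv γ w.1 w.2.1))

/-- The kernel `Q†`. -/
def Qdag (γ : ℝ) (q : Kernel ℝ ℝ) : ℝ × ℝ × ℝ → Measure (ℝ × ℝ × ℝ) := fun w =>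
  if w.2.2 = 1 then
    Measure.map (fun x => (ellMap γ w.2.1 x, w.2.1, (-1 : ℝ)))
      ((q (ellInv γ w.2.1 w.1)).map (fun y => -y))
  else
    Measure.map (fun x => (w.1, ellMap γ w.1 x, (1 : ℝ)))
      ((q (ellInv γ w.1 w.2.1)).map (fun y => -y))

/-- Bounded continuous real-valued functions on a subset `S`. -/
def BddCtsOn {X : Type*} [TopologicalSpace X] (S : Set X) (f : X → ℝ) : Prop :=
  ContinuousOn f S ∧ ∃ C, ∀ x ∈ S, |f x| ≤ C

/-- `m¹` is a reversible measure for `q`. -/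
def Reversible1 (q : Kernel ℝ ℝ) : Prop :=
  ∀ j k : ℝ → ℝ, BddCtsOn (Ioo (-1 : ℝ) 1) j → BddCtsOn (Ioo (-1 : ℝ) 1) k →
    ∫ x, k x * ∫ y, j y ∂(q x) ∂m1 = ∫ x, j x * ∫ y, k y ∂(q x) ∂m1

/-- The `†`-operation on measure-valued functions on `(-1,1)`: `p†(x,A) := p(−x,−A)`. -/
def dag (p : ℝ → Measure ℝ) : ℝ → Measure ℝ := fun x => (p (-x)).map (fun y => -y)

/-- `m¹` is a `†`-reversible measure for `p`. -/
def DagReversible1 (p : ℝ → Measure ℝ) : Prop :=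
  ∀ j k : ℝ → ℝ, BddCtsOn (Ioo (-1 : ℝ) 1) j → BddCtsOn (Ioo (-1 : ℝ) 1) k →
    ∫ x, k x * ∫ y, j y ∂(p x) ∂m1 = ∫ x, j x * ∫ y, k y ∂(dag p x) ∂m1

/-- `m²` is a `†`-reversible measure for `Q`. -/
def DagReversible2 (γ : ℝ) (q : Kernel ℝ ℝ) : Prop :=
  ∀ f g : ℝ × ℝ × ℝ → ℝ, BddCtsOn (EstarSet γ) f → BddCtsOn (EstarSet γ) g →
    ∫ w, g w * ∫ w', f w' ∂(Qfun γ q w) ∂(m2 γ) =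
      ∫ w, f w * ∫ w', g w' ∂(Qdag γ q w) ∂(m2 γ)

/-- `μ` is an invariant measure for the transition function `p`. -/
def KInvariantMeasure {S : Type*} [MeasurableSpace S] (μ : Measure S) (p : S → Measure S) :
    Prop :=
  ∀ A : Set S, MeasurableSet A → ∫⁻ x, p x A ∂μ = μ A

/-- The set `A` is `(μ,p)`-invariant. -/
def KInvariantSet {S : Type*} [MeasurableSpace S] (μ : Measure S) (p : S → Measure S)
    (A : Set S) : Prop :=
  ∀ᵐ x ∂μ, x ∈ A → p x A = 1

/-- `μ` is an ergodic measure for the transition function `p`. -/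
def KErgodicMeasure {S : Type*} [MeasurableSpace S] (μ : Measure S) (p : S → Measure S) :
    Prop :=
  KInvariantMeasure μ p ∧
    ∀ A : Set S, MeasurableSet A → KInvariantSet μ p A → μ A = 0 ∨ μ A = 1

/-- The set `A` is `(μ,p)`-ergodic. -/
def KErgodicSet {S : Type*} [MeasurableSpace S] (μ : Measure S) (p : S → Measure S)
    (A : Set S) : Prop :=
  MeasurableSet A ∧ KInvariantSet μ p A ∧
    ∀ B : Set S, B ⊆ A → MeasurableSet B → KInvariantSet μ p B → μ B = 0 ∨ μ B = μ A

/-- `F⁺`: the slice of `F ⊆ E*` at `s = 1`. -/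
def Fplus (F : Set (ℝ × ℝ × ℝ)) : Set (ℝ × ℝ) := {p | (p.1, p.2, (1 : ℝ)) ∈ F}

/-- `F⁻`: the slice of `F ⊆ E*` at `s = −1`. -/
def Fminus (F : Set (ℝ × ℝ × ℝ)) : Set (ℝ × ℝ) := {p | (p.1, p.2, (-1 : ℝ)) ∈ F}

/-- `[G]^u ⊆ (−1,1)`. -/
def brU (γ : ℝ) (G : Set (ℝ × ℝ)) (u : ℝ) : Set ℝ :=
  {x | x ∈ Ioo (-1 : ℝ) 1 ∧ (u, ellMap γ u x) ∈ G}

/-- `[G]_v ⊆ (−1,1)`. -/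
def brV (γ : ℝ) (G : Set (ℝ × ℝ)) (v : ℝ) : Set ℝ :=
  {x | x ∈ Ioo (-1 : ℝ) 1 ∧ (ellMap γ v x, v) ∈ G}

/-- The map `T₀` on `E*`. -/
def T0 (γ : ℝ) (w : ℝ × ℝ × ℝ) : ℝ × ℝ × ℝ :=
  (-w.1 - 2 * w.2.1 * Real.cos γ, w.2.1, -w.2.2)

/-- The map `T₁` on `E*`. -/
def T1 (γ : ℝ) (w : ℝ × ℝ × ℝ) : ℝ × ℝ × ℝ :=
  (w.1, -w.2.1 - 2 * w.1 * Real.cos γ, -w.2.2)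

/-- The linear map `U_γ` taking `E` to the unit disk. -/
def Ugamma (γ : ℝ) (p : ℝ × ℝ) : ℝ × ℝ := (p.1 + p.2 * Real.cos γ, p.2 * Real.sin γ)

/-- `V(u,v,s) = s·|U_γ(u,v)|²`. -/
def Vfun (γ : ℝ) (w : ℝ × ℝ × ℝ) : ℝ :=
  w.2.2 * ((w.1 + w.2.1 * Real.cos γ) ^ 2 + (w.2.1 * Real.sin γ) ^ 2)

/-!
If `A` is invariant for `Q`, stationarity turns `A⁺` and `A⁻` into a pair of sets that the column
move and the row move of the walk exchange. Ergodicity and reversibility of `q` leave little room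
for exchanged pairs in `(-1, 1)`: indicators of their members lie in the span of `1` and a function
`c` with values `±1` and mean zero (or `c = 0`), the eigenfunction of `q` for the eigenvalue `-1`.
Hence on `E` the indicator `f` of `A⁺` has two expansions, with `v = ℓ_u x` and `u = ℓ_v y`,
`f = a(u) + b(u) c(-x) = a'(v) + b'(v) c(y)`.

By the first expansion, `v ↦ f(ℓ_v y, v)` depends continuously on `y` in `L¹` near almost every
`v`: translation is continuous in `L¹`, and for fixed `y` both `v ↦ u` and `v ↦ x` are local
changes of variables. If `b'` were not almost everywhere zero, the second expansion would make `c`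
locally constant, hence constant, contradicting its mean zero. So `f` depends on `v` alone, by
symmetry also on `u` alone, and it is constant because `E` is connected.
-/

open Filter Topology

section LocallyConstant

variable {X Y Z : Type*} [TopologicalSpace X] [SecondCountableTopology X] [MeasurableSpace X]
  [TopologicalSpace Y] [SecondCountableTopology Y] [MeasurableSpace Y]

lemma eventuallyConst_ae_restrict_of_isPreconnected {μ : Measure X} [μ.IsOpenPosMeasure]
    {Ω : Set X} (hΩ : IsPreconnected Ω) {f : X → Z}
    (h : ∀ p ∈ Ω, ∃ U ∈ 𝓝 p, EventuallyConst f (ae (μ.restrict U))) :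
    EventuallyConst f (ae (μ.restrict Ω)) := by
  rcases Ω.eq_empty_or_nonempty with rfl | ⟨p₀, hp₀⟩
  · simp
  have : Nonempty Z := ⟨f p₀⟩
  simp only [eventuallyConst_iff_exists_eventuallyEq] at h ⊢
  obtain ⟨U₀, hU₀, z, hz⟩ := h p₀ hp₀
  let W (s : Set Z) : Set X := {p | ∃ U ∈ 𝓝 p, ∃ y ∈ s, f =ᵐ[μ.restrict U] fun _ => y}
  have isOpen_W (s : Set Z) : IsOpen (W s) := isOpen_iff_mem_nhds.2 fun p ⟨U, hU, hs⟩ => by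
    filter_upwards [eventually_mem_nhds_iff.2 hU] with y hy using ⟨U, hy, hs⟩
  have cover : Ω ⊆ W {z} ∪ W {z}ᶜ := fun p hp => by
    obtain ⟨U, hU, y, hy⟩ := h p hp
    exact (em (y = z)).imp (fun hyz => ⟨U, hU, y, hyz, hy⟩) fun hyz => ⟨U, hU, y, hyz, hy⟩
  have disjoint : ¬ (Ω ∩ (W {z} ∩ W {z}ᶜ)).Nonempty := by
    rintro ⟨p, -, ⟨U, hU, y, hyz, hy⟩, ⟨V, hV, y', hyz', hy'⟩⟩
    have hfalse : ∀ᵐ _ ∂μ.restrict (U ∩ V), False := by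
      filter_upwards [ae_restrict_of_ae_restrict_of_subset inter_subset_left hy,
        ae_restrict_of_ae_restrict_of_subset inter_subset_right hy'] with x hx hx'
      exact hyz' (hx'.symm.trans (hx.trans hyz))
    exact (Measure.measure_pos_of_mem_nhds μ (inter_mem hU hV)).ne'
      (by simpa [ae_iff] using hfalse)
  have subset_W : Ω ⊆ W {z} := by
    by_contra hsub
    obtain ⟨p, hp, hpz⟩ := not_subset.1 hsub
    exact disjoint (hΩ _ _ (isOpen_W _) (isOpen_W _) cover ⟨p₀, hp₀, U₀, hU₀, z, rfl, hz⟩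
      ⟨p, hp, (cover hp).resolve_left hpz⟩)
  choose! U hU y hyz hy using subset_W
  obtain ⟨t, htΩ, ht, hcov⟩ :=
    TopologicalSpace.countable_cover_nhdsWithin fun p hp => mem_nhdsWithin_of_mem_nhds (hU hp)
  refine ⟨z, ae_restrict_of_ae_restrict_of_subset hcov ?_⟩
  exact (ae_restrict_biUnion_iff U ht _).2 fun p hp =>
    (hy (htΩ hp)).trans (by rw [mem_singleton_iff.1 (hyz (htΩ hp))])

lemma eventuallyConst_of_ae_eq_comp_fst_of_ae_eq_comp_snd {μ : Measure X} {ν : Measure Y}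
    [SFinite μ] [SFinite ν] [μ.IsOpenPosMeasure] [ν.IsOpenPosMeasure]
    {Ω : Set (X × Y)} (hΩo : IsOpen Ω) (hΩ : IsPreconnected Ω) {f : X × Y → Z}
    {a : X → Z} {b : Y → Z} (ha : ∀ᵐ p ∂(μ.prod ν).restrict Ω, f p = a p.1)
    (hb : ∀ᵐ p ∂(μ.prod ν).restrict Ω, f p = b p.2) :
    EventuallyConst f (ae ((μ.prod ν).restrict Ω)) := by
  refine eventuallyConst_ae_restrict_of_isPreconnected hΩ fun p hp => ?_
  obtain ⟨U, hU, V, hV, hUV⟩ := mem_nhds_prod_iff.1 (hΩo.mem_nhds hp)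
  refine ⟨U ×ˢ V, prod_mem_nhds hU hV, ?_⟩
  replace ha := ae_restrict_of_ae_restrict_of_subset hUV ha
  replace hb := ae_restrict_of_ae_restrict_of_subset hUV hb
  rw [← Measure.prod_restrict] at ha hb ⊢
  have hab : ∀ᵐ x ∂μ.restrict U, ∀ᵐ y ∂ν.restrict V, a x = b y :=
    Measure.ae_ae_of_ae_prod (by filter_upwards [ha, hb] with p h h' using h.symm.trans h')
  have : (ae (μ.restrict U)).NeBot :=
    ae_restrict_neBot.2 (Measure.measure_pos_of_mem_nhds μ hU).ne'
  obtain ⟨x, hx⟩ := hab.exists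
  have hconst : EventuallyConst (b ∘ Prod.snd) (ae ((μ.restrict U).prod (ν.restrict V))) :=
    (EventuallyConst.congr (.const (a x)) hx).comp_tendsto
      Measure.quasiMeasurePreserving_snd.tendsto_ae
  exact hconst.congr (by filter_upwards [hb] with p hp using hp.symm)

end LocallyConstant

section L1

variable {ι V E : Type*} [MeasurableSpace V] [NormedAddCommGroup E] {ν : Measure V} {l : Filter ι}

lemma tendsto_lintegral_enorm_comp_sub {Y : Type*} [TopologicalSpace Y] [NormalSpace Y]
    [MeasurableSpace Y] [BorelSpace Y] [SecondCountableTopologyEither Y E] [NormedSpace ℝ E]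
    [IsFiniteMeasure ν] [l.IsCountablyGenerated] {ρ : Measure Y} [ρ.WeaklyRegular]
    {φ : ι → V → Y} {ψ : V → Y} {H : Y → E} (hφ : ∀ i, Measurable (φ i)) (hψ : Measurable ψ)
    (hφρ : ∀ᶠ i in l, ν.map (φ i) ≤ ρ) (hψρ : ν.map ψ ≤ ρ)
    (hlim : ∀ᵐ v ∂ν, Tendsto (φ · v) l (𝓝 (ψ v))) (hH : Integrable H ρ) :
    Tendsto (fun i => ∫⁻ v, ‖H (φ i v) - H (ψ v)‖ₑ ∂ν) l (𝓝 0) := by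
  refine ENNReal.tendsto_nhds_zero.2 fun ε hε => ?_
  obtain ⟨g, hg, -⟩ := hH.exists_boundedContinuous_lintegral_sub_le
    (ENNReal.div_pos hε.ne' (by simp : (3 : ℝ≥0∞) ≠ ∞)).ne'
  have hgm : StronglyMeasurable g := g.continuous.stronglyMeasurable
  have approx {θ : V → Y} (hθ : Measurable θ) (hθρ : ν.map θ ≤ ρ) :
      AEMeasurable (fun v => ‖H (θ v) - g (θ v)‖ₑ) ν ∧
        ∫⁻ v, ‖H (θ v) - g (θ v)‖ₑ ∂ν ≤ ε / 3 := by
    have hm : AEMeasurable (fun y => ‖H y - g y‖ₑ) (ν.map θ) :=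
      ((hH.1.mono_measure hθρ).sub hgm.aestronglyMeasurable).enorm
    refine ⟨hm.comp_measurable hθ, ?_⟩
    rw [← lintegral_map' hm hθ.aemeasurable]
    exact (lintegral_mono' hθρ le_rfl).trans hg
  have hgm' (i : ι) : AEMeasurable (fun v => ‖g (φ i v) - g (ψ v)‖ₑ) ν :=
    ((hgm.comp_measurable (hφ i)).sub (hgm.comp_measurable hψ)).enorm.aemeasurable
  have lim_g : Tendsto (fun i => ∫⁻ v, ‖g (φ i v) - g (ψ v)‖ₑ ∂ν) l (𝓝 0) := by
    rw [← lintegral_zero (μ := ν)]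
    refine tendsto_lintegral_filter_of_dominated_convergence' (fun _ => ENNReal.ofReal (2 * ‖g‖))
      (.of_forall hgm') (.of_forall fun i => .of_forall fun v => ?_)
      (by simp [ENNReal.mul_eq_top]) ?_
    · rw [← edist_eq_enorm_sub, edist_dist]
      exact ENNReal.ofReal_le_ofReal (g.dist_le_two_norm _ _)
    · filter_upwards [hlim] with v hv
      have := ((g.continuous.tendsto _).comp hv).sub_const (g (ψ v))
      simpa using this.enorm
  filter_upwards [hφρ, ENNReal.tendsto_nhds_zero.1 lim_g (ε / 3)
    (ENNReal.div_pos hε.ne' (by simp))] with i hi hgi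
  obtain ⟨hm₁, h₁⟩ := approx (hφ i) hi
  obtain ⟨hm₂, h₂⟩ := approx hψ hψρ
  calc ∫⁻ v, ‖H (φ i v) - H (ψ v)‖ₑ ∂ν
      ≤ ∫⁻ v, (‖H (φ i v) - g (φ i v)‖ₑ + ‖g (φ i v) - g (ψ v)‖ₑ)
          + ‖H (ψ v) - g (ψ v)‖ₑ ∂ν := by
        refine lintegral_mono fun v => ?_
        simp only [← edist_eq_enorm_sub]
        rw [edist_comm (H (ψ v))]
        exact edist_triangle4 _ _ _ _
    _ = ∫⁻ v, ‖H (φ i v) - g (φ i v)‖ₑ ∂ν + ∫⁻ v, ‖g (φ i v) - g (ψ v)‖ₑ ∂ν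
          + ∫⁻ v, ‖H (ψ v) - g (ψ v)‖ₑ ∂ν := by
        rw [lintegral_add_right' _ hm₂, lintegral_add_left' hm₁]
    _ ≤ ε / 3 + ε / 3 + ε / 3 := by gcongr
    _ = ε := ENNReal.add_thirds ε

lemma tendsto_lintegral_enorm_mul_sub {f g : ι → V → ℝ} {f₀ g₀ : V → ℝ} {C : ℝ≥0∞} (hC : C ≠ ∞)
    (hf : ∀ i, AEStronglyMeasurable (f i) ν) (hf₀ : AEStronglyMeasurable f₀ ν)
    (hg : ∀ i v, ‖g i v‖ₑ ≤ C) (hfC : ∀ v, ‖f₀ v‖ₑ ≤ C)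
    (hfl : Tendsto (fun i => ∫⁻ v, ‖f i v - f₀ v‖ₑ ∂ν) l (𝓝 0))
    (hgl : Tendsto (fun i => ∫⁻ v, ‖g i v - g₀ v‖ₑ ∂ν) l (𝓝 0)) :
    Tendsto (fun i => ∫⁻ v, ‖f i v * g i v - f₀ v * g₀ v‖ₑ ∂ν) l (𝓝 0) := by
  have hsum := (ENNReal.Tendsto.const_mul hfl (.inr hC)).add
    (ENNReal.Tendsto.const_mul hgl (.inr hC))
  rw [mul_zero, add_zero] at hsum
  refine tendsto_of_tendsto_of_tendsto_of_le_of_le tendsto_const_nhds hsum (fun _ => zero_le) ?_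
  intro i
  dsimp only
  have hm : AEMeasurable (fun v => C * ‖f i v - f₀ v‖ₑ) ν := ((hf i).sub hf₀).enorm.const_mul C
  rw [← lintegral_const_mul' _ _ hC, ← lintegral_const_mul' _ _ hC, ← lintegral_add_left' hm]
  refine lintegral_mono fun v => ?_
  calc ‖f i v * g i v - f₀ v * g₀ v‖ₑ
      = ‖g i v * (f i v - f₀ v) + f₀ v * (g i v - g₀ v)‖ₑ := by ring_nf
    _ ≤ ‖g i v‖ₑ * ‖f i v - f₀ v‖ₑ + ‖f₀ v‖ₑ * ‖g i v - g₀ v‖ₑ := by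
        simpa only [enorm_mul] using
          enorm_add_le (g i v * (f i v - f₀ v)) (f₀ v * (g i v - g₀ v))
    _ ≤ _ := by
        gcongr
        exacts [hg i v, hfC v]

lemma exists_eventuallyConst_of_tendsto_lintegral_enorm_sub {X : Type*} [TopologicalSpace X]
    [MeasurableSpace X] [OpensMeasurableSpace X] {μ : Measure X} {F : X → V → ℝ} {a b : V → ℝ}
    {c : X → ℝ} {x₀ : X} (hc : ∀ x, c x = 1 ∨ c x = -1)
    (hFm : ∀ x, AEStronglyMeasurable (F x) ν)
    (hF : ∀ᵐ x ∂μ, ∀ᵐ v ∂ν, F x v = a v + b v * c x) (hb : ∫⁻ v, ‖b v‖ₑ ∂ν ≠ 0)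
    (hlim : Tendsto (fun x => ∫⁻ v, ‖F x v - F x₀ v‖ₑ ∂ν) (𝓝 x₀) (𝓝 0)) :
    ∃ U ∈ 𝓝 x₀, EventuallyConst c (ae (μ.restrict U)) := by
  obtain ⟨U, hU, hUo, hxU⟩ := mem_nhds_iff.1 (hlim.eventually_lt_const (pos_iff_ne_zero.2 hb))
  refine ⟨U, hUo.mem_nhds hxU, ?_⟩
  -- Values of `c` of opposite sign would make `F x - F x'` equal to `2 * b`.
  have not_both {x x' : X} (hx : x ∈ U) (hx' : x' ∈ U) (hFx : ∀ᵐ v ∂ν, F x v = a v + b v * c x)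
      (hFx' : ∀ᵐ v ∂ν, F x' v = a v + b v * c x') (hcx : c x = 1) : c x' = 1 := by
    refine (hc x').resolve_right fun hcx' => ?_
    refine lt_irrefl (∫⁻ v, ‖b v‖ₑ ∂ν + ∫⁻ v, ‖b v‖ₑ ∂ν) ?_
    calc ∫⁻ v, ‖b v‖ₑ ∂ν + ∫⁻ v, ‖b v‖ₑ ∂ν
        = ∫⁻ v, 2 * ‖b v‖ₑ ∂ν := by rw [lintegral_const_mul' _ _ (by simp), two_mul]
      _ ≤ ∫⁻ v, ‖F x v - F x₀ v‖ₑ + ‖F x' v - F x₀ v‖ₑ ∂ν := by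
          refine lintegral_mono_ae ?_
          filter_upwards [hFx, hFx'] with v hv hv'
          rw [hcx] at hv
          rw [hcx'] at hv'
          calc 2 * ‖b v‖ₑ
              = ‖2 * b v‖ₑ := by
                rw [enorm_mul, Real.enorm_eq_ofReal zero_le_two, ENNReal.ofReal_ofNat]
            _ = ‖(F x v - F x₀ v) - (F x' v - F x₀ v)‖ₑ := by rw [hv, hv']; ring_nf
            _ ≤ _ := enorm_sub_le
      _ = ∫⁻ v, ‖F x v - F x₀ v‖ₑ ∂ν + ∫⁻ v, ‖F x' v - F x₀ v‖ₑ ∂ν :=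
          lintegral_add_left' ((hFm x).sub (hFm x₀)).enorm _
      _ < _ := ENNReal.add_lt_add (hU hx) (hU hx')
  have hFU := (ae_restrict_of_ae (s := U) hF).and (ae_restrict_mem hUo.measurableSet)
  by_cases h : ∃ x ∈ U, (∀ᵐ v ∂ν, F x v = a v + b v * c x) ∧ c x = 1
  · obtain ⟨x, hx, hFx, hcx⟩ := h
    exact eventuallyConst_iff_exists_eventuallyEq.2
      ⟨1, hFU.mono fun x' h' => not_both hx h'.2 hFx h'.1 hcx⟩
  · push Not at h
    exact eventuallyConst_iff_exists_eventuallyEq.2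
      ⟨-1, hFU.mono fun x' h' => (hc x').resolve_left (h x' h'.2 h'.1)⟩

end L1

section ChangeOfVariables

lemma injOn_of_hasDerivAt_ne_zero {φ φ' : ℝ → ℝ} {J : Set ℝ} (hJ : J.OrdConnected)
    (hφ : ∀ t ∈ J, HasDerivAt φ (φ' t) t) (hφ' : ∀ t ∈ J, φ' t ≠ 0) : InjOn φ J := by
  have ne_of_lt {a b : ℝ} (ha : a ∈ J) (hb : b ∈ J) (hab : a < b) : φ a ≠ φ b := fun h => by
    have hsub : Icc a b ⊆ J := hJ.out ha hb
    obtain ⟨t, ht, ht0⟩ := exists_hasDerivAt_eq_zero hab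
      (fun t ht => (hφ t (hsub ht)).continuousAt.continuousWithinAt) h
      (fun t ht => hφ t (hsub (Ioo_subset_Icc_self ht)))
    exact hφ' t (hsub (Ioo_subset_Icc_self ht)) ht0
  intro a ha b hb h
  by_contra hab
  exact (lt_or_gt_of_ne hab).elim (fun hlt => ne_of_lt ha hb hlt h)
    fun hlt => ne_of_lt hb ha hlt h.symm

lemma map_restrict_le_of_le_abs_deriv {φ φ' : ℝ → ℝ} {J K : Set ℝ} {κ : ℝ} (hκ : 0 < κ)
    (hφm : Measurable φ) (hJ : J.OrdConnected) (hφ : ∀ t ∈ J, HasDerivAt φ (φ' t) t)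
    (hφ' : ∀ t ∈ J, κ ≤ |φ' t|) (hK : MapsTo φ J K) :
    (volume.restrict J).map φ ≤ (ENNReal.ofReal κ)⁻¹ • volume.restrict K := by
  refine Measure.le_iff.2 fun S hS => ?_
  have hinj := injOn_of_hasDerivAt_ne_zero hJ hφ fun t ht => abs_pos.1 (hκ.trans_le (hφ' t ht))
  rw [Measure.map_apply hφm hS, Measure.restrict_apply (hφm hS), Measure.smul_apply,
    Measure.restrict_apply hS, smul_eq_mul, mul_comm, ← div_eq_mul_inv,
    ENNReal.le_div_iff_mul_le (by simp [hκ]) (by simp)]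
  have hT : MeasurableSet (φ ⁻¹' S ∩ J) := (hφm hS).inter hJ.measurableSet
  calc volume (φ ⁻¹' S ∩ J) * ENNReal.ofReal κ
      = ∫⁻ _ in φ ⁻¹' S ∩ J, ENNReal.ofReal κ := by rw [setLIntegral_const, mul_comm]
    _ ≤ ∫⁻ t in φ ⁻¹' S ∩ J, ENNReal.ofReal |φ' t| * 1 :=
        setLIntegral_mono' hT fun t ht => by
          rw [mul_one]; exact ENNReal.ofReal_le_ofReal (hφ' t ht.2)
    _ = ∫⁻ _ in φ '' (φ ⁻¹' S ∩ J), 1 :=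
        (lintegral_image_eq_lintegral_abs_deriv_mul hT
          (fun t ht => (hφ t ht.2).hasDerivWithinAt) (hinj.mono inter_subset_right)
          fun _ => 1).symm
    _ = volume (φ '' (φ ⁻¹' S ∩ J)) := setLIntegral_one _
    _ ≤ volume (S ∩ K) := measure_mono (image_subset_iff.2 fun t ht => ⟨ht.1, hK ht.2⟩)

lemma eventually_smallSets_tendsto_lintegral_enorm_comp_sub {E : Type*} [NormedAddCommGroup E]
    [NormedSpace ℝ E] {φ : ℝ → ℝ → ℝ} {x₀ v₀ : ℝ} (hφm : ∀ x, Measurable (φ x))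
    (hφ : ContDiffAt ℝ 1 (fun p : ℝ × ℝ => φ p.1 p.2) (x₀, v₀)) (h0 : deriv (φ x₀) v₀ ≠ 0) :
    ∀ᶠ J in (𝓝 v₀).smallSets, ∀ H : ℝ → E, LocallyIntegrable H →
      Tendsto (fun x => ∫⁻ v in J, ‖H (φ x v) - H (φ x₀ v)‖ₑ) (𝓝 x₀) (𝓝 0) := by
  rw [eventually_smallSets' fun s t hst h H hH => tendsto_of_tendsto_of_tendsto_of_le_of_le
    tendsto_const_nhds (h H hH) (fun _ => zero_le) fun _ => lintegral_mono_set hst]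
  let φ' (p : ℝ × ℝ) : ℝ := fderiv ℝ (fun p : ℝ × ℝ => φ p.1 p.2) p (0, 1)
  have hasDerivAt {p : ℝ × ℝ} (hp : ContDiffAt ℝ 1 (fun p : ℝ × ℝ => φ p.1 p.2) p) :
      HasDerivAt (φ p.1) (φ' p) p.2 :=
    HasFDerivAt.comp_hasDerivAt (l := fun p : ℝ × ℝ => φ p.1 p.2) (f := fun v => (p.1, v)) p.2
      (hp.differentiableAt one_ne_zero).hasFDerivAt
      ((hasDerivAt_const p.2 p.1).prodMk (hasDerivAt_id p.2))
  have hφ'c : ContinuousAt φ' (x₀, v₀) :=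
    (hφ.continuousAt_fderiv one_ne_zero).clm_apply continuousAt_const
  have hpos : 0 < |φ' (x₀, v₀)| := abs_pos.2 (by rwa [← (hasDerivAt hφ).deriv])
  have hκ : 0 < |φ' (x₀, v₀)| / 2 := half_pos hpos
  have near := (hφ.eventually (by simp)).and ((hφ'c.abs.eventually_const_lt
    (half_lt_self hpos)).and
    (hφ.continuousAt.eventually (Metric.closedBall_mem_nhds _ one_pos)))
  obtain ⟨δ, hδ, hall⟩ := Metric.eventually_nhds_iff_ball.1 near
  simp only [← ball_prod_same, mem_prod, and_imp, Prod.forall] at hall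
  refine ⟨Metric.ball v₀ δ, Metric.ball_mem_nhds v₀ hδ, fun H hH => ?_⟩
  have hmap {x : ℝ} (hx : x ∈ Metric.ball x₀ δ) :
      (volume.restrict (Metric.ball v₀ δ)).map (φ x) ≤
        (ENNReal.ofReal (|φ' (x₀, v₀)| / 2))⁻¹ •
          volume.restrict (Metric.closedBall (φ x₀ v₀) 1) :=
    map_restrict_le_of_le_abs_deriv hκ (hφm x) (convex_ball v₀ δ).ordConnected
      (fun t ht => hasDerivAt (hall x t hx ht).1) (fun t ht => (hall x t hx ht).2.1.le)
      fun t ht => (hall x t hx ht).2.2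
  have hκ_top : (ENNReal.ofReal (|φ' (x₀, v₀)| / 2))⁻¹ ≠ ∞ := by simpa using hκ
  have := isFiniteMeasure_restrict.2 (measure_ball_lt_top (μ := volume) (x := v₀) (r := δ)).ne
  have := isFiniteMeasure_restrict.2
    (measure_closedBall_lt_top (μ := volume) (x := φ x₀ v₀) (r := 1)).ne
  have := Measure.smul_finite (volume.restrict (Metric.closedBall (φ x₀ v₀) 1)) hκ_top
  refine tendsto_lintegral_enorm_comp_sub hφm (hφm x₀)
    (eventually_of_mem (Metric.ball_mem_nhds x₀ hδ) fun x hx => hmap hx)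
    (hmap (Metric.mem_ball_self hδ)) ?_
    ((hH.integrableOn_isCompact (isCompact_closedBall _ _)).smul_measure hκ_top)
  filter_upwards [ae_restrict_mem Metric.isOpen_ball.measurableSet] with v hv
  have hc := (hall x₀ v (Metric.mem_ball_self hδ) hv).1.continuousAt
  exact hc.tendsto.comp (Continuous.prodMk_left v).continuousAt.tendsto

end ChangeOfVariables

section MeasurableUnitBounded

variable {S X : Type*} [MeasurableSpace S] [MeasurableSpace X] {μ : Measure S}
  [IsProbabilityMeasure μ] {c : S → ℝ} {T : Set (X × S)}

/-- Measurable functions with values in `[-1, 1]`. -/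
structure MeasurableUnitBounded {S : Type*} [MeasurableSpace S] (a : S → ℝ) : Prop where
  measurable : Measurable a
  norm_le_one : ∀ u, ‖a u‖ ≤ 1

namespace MeasurableUnitBounded

lemma enorm_le_one (hc : MeasurableUnitBounded c) (x : S) : ‖c x‖ₑ ≤ 1 := by
  rw [← ofReal_norm]
  exact ENNReal.ofReal_le_one.2 (hc.norm_le_one x)

lemma measureReal_section (hT : MeasurableSet T) :
    MeasurableUnitBounded fun u => μ.real (Prod.mk u ⁻¹' T) where
  measurable := (measurable_measure_prodMk_left hT).ennreal_toReal
  norm_le_one u := by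
    rw [Real.norm_of_nonneg measureReal_nonneg]
    exact measureReal_le_one

lemma setIntegral_section (hT : MeasurableSet T)
    (hc : MeasurableUnitBounded c) :
    MeasurableUnitBounded fun u => ∫ x in Prod.mk u ⁻¹' T, c x ∂μ where
  measurable := by
    have := (((hc.measurable.comp measurable_snd).indicator hT).stronglyMeasurable
      |>.integral_prod_right' (ν := μ)).measurable
    convert this using 2 with u
    exact (integral_indicator (measurable_prodMk_left hT)).symm
  norm_le_one u := by
    have := norm_setIntegral_le_of_norm_le_const (μ := μ) (s := Prod.mk u ⁻¹' T)
      (measure_lt_top _ _) fun x _ => hc.norm_le_one x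
    rw [one_mul] at this
    exact this.trans measureReal_le_one

end MeasurableUnitBounded

end MeasurableUnitBounded

section ReversibleKernel

variable {S : Type*} [MeasurableSpace S] {κ : Kernel S S} {μ : Measure S} {C D C' D' : Set S}

/-- One step of `κ` lands in `C` exactly when it starts in `D`, up to a `μ`-null set of starting
points. These pairs are the `0`-`1` valued solutions of `κ 1_C = 1_D`. -/
structure IsExchangePair (κ : Kernel S S) (μ : Measure S) (C D : Set S) : Prop where
  measurableSet_left : MeasurableSet C
  measurableSet_right : MeasurableSet D
  ae_eq_indicator : ∀ᵐ x ∂μ, κ x C = D.indicator 1 x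

/-- A function that is identically `0`, or takes the values `±1` with mean zero. In the second case
it is meant to span the `-1`-eigenspace of a reversible ergodic kernel; in the first case that
eigenspace is trivial. -/
structure IsBalancedSign (μ : Measure S) (c : S → ℝ) : Prop where
  measurable : Measurable c
  eq_zero_or : c = 0 ∨ (∀ x, c x = 1 ∨ c x = -1) ∧ ∫ x, c x ∂μ = 0

namespace IsExchangePair

lemma congr_right (h : IsExchangePair κ μ C D) (hD' : MeasurableSet D') (hDD' : D =ᵐ[μ] D') :
    IsExchangePair κ μ C D' where
  measurableSet_left := h.measurableSet_left
  measurableSet_right := hD'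
  ae_eq_indicator := by
    filter_upwards [h.ae_eq_indicator, indicator_ae_eq_of_ae_eq_set (f := (1 : S → ℝ≥0∞)) hDD']
      with x hx hx' using hx.trans hx'

lemma compl [IsMarkovKernel κ] (h : IsExchangePair κ μ C D) : IsExchangePair κ μ Cᶜ Dᶜ where
  measurableSet_left := h.measurableSet_left.compl
  measurableSet_right := h.measurableSet_right.compl
  ae_eq_indicator := by
    filter_upwards [h.ae_eq_indicator] with x hx
    rw [prob_compl_eq_one_sub h.measurableSet_left, hx]
    by_cases hxD : x ∈ D <;> simp [hxD]

lemma inter [IsMarkovKernel κ] (h : IsExchangePair κ μ C D) (h' : IsExchangePair κ μ C' D') :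
    IsExchangePair κ μ (C ∩ C') (D ∩ D') where
  measurableSet_left := h.measurableSet_left.inter h'.measurableSet_left
  measurableSet_right := h.measurableSet_right.inter h'.measurableSet_right
  ae_eq_indicator := by
    filter_upwards [h.ae_eq_indicator, h'.ae_eq_indicator] with x hx hx'
    rw [inter_indicator_one, Pi.mul_apply, ← hx, ← hx']
    by_cases hxD : x ∈ D
    · rw [indicator_of_mem hxD, Pi.one_apply] at hx
      rw [hx, one_mul, Measure.measure_inter_eq_of_ae
        ((mem_ae_iff_prob_eq_one h.measurableSet_left).2 hx)]
    · rw [indicator_of_notMem hxD] at hx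
      rw [hx, zero_mul, measure_mono_null inter_subset_left hx]

lemma union [IsMarkovKernel κ] (h : IsExchangePair κ μ C D) (h' : IsExchangePair κ μ C' D') :
    IsExchangePair κ μ (C ∪ C') (D ∪ D') := by
  simpa only [compl_inter, compl_compl] using (h.compl.inter h'.compl).compl

-- Detailed balance gives `∫ x in Cᶜ, κ x D = ∫ x in D, κ x Cᶜ = 0`, and likewise for `C` and `Dᶜ`.
lemma symm [IsMarkovKernel κ] (hrev : κ.IsReversible μ) (h : IsExchangePair κ μ C D) :
    IsExchangePair κ μ D C where
  measurableSet_left := h.measurableSet_right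
  measurableSet_right := h.measurableSet_left
  ae_eq_indicator := by
    have eq_zero_on_compl {A B : Set S} (hAB : IsExchangePair κ μ A B) :
        ∀ᵐ x ∂μ, x ∈ Aᶜ → κ x B = 0 := by
      have hA := hAB.measurableSet_left
      have hB := hAB.measurableSet_right
      rw [← ae_restrict_iff' hA.compl, ← EventuallyEq, ← Pi.zero_def,
        ← lintegral_eq_zero_iff (κ.measurable_coe hB), hrev hA.compl hB,
        lintegral_eq_zero_iff (κ.measurable_coe hA.compl), EventuallyEq, ae_restrict_iff' hB]
      filter_upwards [hAB.compl.ae_eq_indicator] with x hx hxB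
      rw [hx, indicator_of_notMem (notMem_compl_iff.2 hxB), Pi.zero_apply]
    filter_upwards [eq_zero_on_compl h, eq_zero_on_compl h.compl] with x hx hx'
    by_cases hxC : x ∈ C
    · rw [indicator_of_mem hxC, Pi.one_apply,
        ← prob_compl_eq_zero_iff h.measurableSet_right]
      exact hx' (notMem_compl_iff.2 hxC)
    · rw [indicator_of_notMem hxC, hx hxC]

lemma measure_eq (hinv : KInvariantMeasure μ (fun x => κ x)) (h : IsExchangePair κ μ C D) :
    μ C = μ D := by
  rw [← hinv C h.measurableSet_left, lintegral_congr_ae h.ae_eq_indicator,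
    lintegral_indicator_one h.measurableSet_right]

lemma measure_eq_zero_or_one (herg : KErgodicMeasure μ (fun x => κ x))
    (h : IsExchangePair κ μ C C) : μ C = 0 ∨ μ C = 1 :=
  herg.2 C h.measurableSet_left <| h.ae_eq_indicator.mono fun x hx hxC => by
    rw [hx, indicator_of_mem hxC, Pi.one_apply]

variable [IsMarkovKernel κ] [IsProbabilityMeasure μ]

lemma measure_eq_zero_or_one_or_compl (hrev : κ.IsReversible μ)
    (herg : KErgodicMeasure μ (fun x => κ x)) (h : IsExchangePair κ μ C D) :
    μ C = 0 ∨ μ C = 1 ∨ IsExchangePair κ μ C Cᶜ := by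
  have hunion : IsExchangePair κ μ (C ∪ D) (C ∪ D) := by
    simpa only [union_comm] using h.union (h.symm hrev)
  have hinter : IsExchangePair κ μ (C ∩ D) (C ∩ D) := by
    simpa only [inter_comm] using h.inter (h.symm hrev)
  rcases hunion.measure_eq_zero_or_one herg with hu | hu
  · exact .inl (measure_mono_null subset_union_left hu)
  rcases hinter.measure_eq_zero_or_one herg with hi | hi
  · refine .inr (.inr (h.congr_right h.measurableSet_left.compl ?_))
    filter_upwards [measure_eq_zero_iff_ae_notMem.1 hi,
      (mem_ae_iff_prob_eq_one hunion.measurableSet_left).2 hu] with x hxi hxu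
    exact propext ⟨fun hxD hxC => hxi ⟨hxC, hxD⟩, fun hxC => hxu.resolve_left hxC⟩
  · exact .inr (.inl (le_antisymm prob_le_one (hi ▸ measure_mono inter_subset_left)))

lemma ae_eq_or_ae_eq_compl (herg : KErgodicMeasure μ (fun x => κ x))
    (h : IsExchangePair κ μ C Cᶜ) (h' : IsExchangePair κ μ D Dᶜ) :
    C =ᵐ[μ] D ∨ C =ᵐ[μ] (Dᶜ : Set S) := by
  have hagree : IsExchangePair κ μ (C ∩ D ∪ Cᶜ ∩ Dᶜ) (C ∩ D ∪ Cᶜ ∩ Dᶜ) := by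
    simpa only [compl_compl, union_comm] using (h.inter h').union (h.compl.inter h'.compl)
  rcases hagree.measure_eq_zero_or_one herg with h0 | h1
  · refine .inr ?_
    filter_upwards [measure_eq_zero_iff_ae_notMem.1 h0] with x hx
    exact propext ⟨fun hC hD => hx (.inl ⟨hC, hD⟩),
      fun hD => by_contra fun hC => hx (.inr ⟨hC, hD⟩)⟩
  · refine .inl ?_
    filter_upwards [(mem_ae_iff_prob_eq_one hagree.measurableSet_left).2 h1] with x hx
    exact propext (hx.elim (fun hx => iff_of_true hx.1 hx.2) fun hx => iff_of_false hx.1 hx.2)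

end IsExchangePair

lemma KInvariantSet.isExchangePair [IsFiniteMeasure μ]
    (hinv : KInvariantMeasure μ (fun x => κ x)) (hC : MeasurableSet C)
    (h : KInvariantSet μ (fun x => κ x) C) : IsExchangePair κ μ C C where
  measurableSet_left := hC
  measurableSet_right := hC
  ae_eq_indicator := by
    refine (ae_eq_of_ae_le_of_lintegral_le ?_ ?_ (κ.measurable_coe hC).aemeasurable ?_).symm
    · filter_upwards [h] with x hx
      by_cases hxC : x ∈ C
      · simp [hxC, hx hxC]
      · simp [hxC]
    · simp [lintegral_indicator_one hC]
    · rw [hinv C hC, lintegral_indicator_one hC]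

namespace IsBalancedSign

variable {X : Type*} [MeasurableSpace X] {c : S → ℝ}

lemma norm_le_one (hc : IsBalancedSign μ c) (x : S) : ‖c x‖ ≤ 1 := by
  rcases hc.eq_zero_or with rfl | ⟨hsign, -⟩
  · simp
  · rcases hsign x with h | h <;> simp [h]

lemma measurableUnitBounded (hc : IsBalancedSign μ c) :
    MeasurableUnitBounded c :=
  ⟨hc.measurable, hc.norm_le_one⟩

lemma comp {g : X → S} {ν : Measure X} (hc : IsBalancedSign μ c) (hg : MeasurePreserving g ν μ) :
    IsBalancedSign ν (c ∘ g) where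
  measurable := hc.measurable.comp hg.measurable
  eq_zero_or := by
    refine hc.eq_zero_or.imp (fun h => by rw [h]; rfl) fun ⟨hsign, hint⟩ =>
      ⟨fun x => hsign (g x), ?_⟩
    rw [← hint, ← hg.map_eq, integral_map hg.aemeasurable hc.measurable.aestronglyMeasurable]
    rfl

lemma integral_eq_zero (hc : IsBalancedSign μ c) : ∫ x, c x ∂μ = 0 := by
  rcases hc.eq_zero_or with rfl | ⟨-, h⟩
  · simp
  · exact h

variable [IsProbabilityMeasure μ]

lemma indicator_ae_eq_of_measure_eq_zero_or_one (hc : IsBalancedSign μ c) (hC : MeasurableSet C)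
    (h : μ C = 0 ∨ μ C = 1) :
    ∀ᵐ x ∂μ, C.indicator 1 x = μ.real C + (∫ y in C, c y ∂μ) * c x := by
  rcases h with h | h
  · filter_upwards [measure_eq_zero_iff_ae_notMem.1 h] with x hx
    rw [indicator_of_notMem hx, setIntegral_measure_zero _ h, Measure.real, h]
    simp
  · have hmem := (mem_ae_iff_prob_eq_one hC).2 h
    filter_upwards [hmem] with x hx
    rw [indicator_of_mem hx, Measure.restrict_eq_self_of_ae_mem hmem, hc.integral_eq_zero]
    simp [Measure.real, h]

lemma eq_zero_of_eventuallyConst (hc : IsBalancedSign μ c)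
    (hconst : EventuallyConst c (ae μ)) : c = 0 := by
  refine hc.eq_zero_or.resolve_right fun ⟨hsign, hint⟩ => ?_
  obtain ⟨y, hy⟩ := eventuallyConst_iff_exists_eventuallyEq.1 hconst
  obtain ⟨x, hx⟩ := hy.exists
  have hy0 : y = 0 := by
    rw [integral_congr_ae hy, integral_const, probReal_univ, one_smul] at hint
    exact hint
  rcases hsign x with h | h <;> norm_num [hy0, h] at hx

end IsBalancedSign

section BalancedSign

variable [IsProbabilityMeasure μ]

lemma IsExchangePair.measureReal_eq_half (hinv : KInvariantMeasure μ (fun x => κ x))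
    (h : IsExchangePair κ μ C Cᶜ) : μ.real C = 1 / 2 := by
  have hsum := probReal_add_probReal_compl (μ := μ) h.measurableSet_left
  have heq : μ.real C = μ.real Cᶜ := congrArg ENNReal.toReal (h.measure_eq hinv)
  linarith

lemma isBalancedSign_two_mul_indicator_sub_one (hC : MeasurableSet C) (h : μ.real C = 1 / 2) :
    IsBalancedSign μ fun x => 2 * C.indicator (1 : S → ℝ) x - 1 where
  measurable := ((measurable_one.indicator hC).const_mul 2).sub_const 1
  eq_zero_or := by
    refine .inr ⟨fun x => ?_, ?_⟩
    · by_cases hx : x ∈ C <;> norm_num [hx]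
    · have hint : Integrable (C.indicator (1 : S → ℝ)) μ :=
        (integrable_const 1).indicator hC
      rw [integral_sub (hint.const_mul 2) (integrable_const 1), integral_const_mul,
        integral_indicator_one hC, h]
      simp

lemma setIntegral_two_mul_indicator_sub_one (hC : MeasurableSet C) (D : Set S) :
    ∫ x in D, (2 * C.indicator (1 : S → ℝ) x - 1) ∂μ = 2 * μ.real (C ∩ D) - μ.real D := by
  have hint : Integrable (C.indicator (1 : S → ℝ)) (μ.restrict D) :=
    (integrable_const 1).indicator hC
  rw [integral_sub (hint.const_mul 2) (integrable_const 1), integral_const_mul,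
    integral_indicator_one hC, measureReal_restrict_apply hC]
  simp

variable [IsMarkovKernel κ]

/- If some `B` is exchanged with its complement, then `c = 1_B - 1_{Bᶜ}` works, because any other
such set is `B` or `Bᶜ` up to a null set; otherwise `c = 0` does. -/
theorem exists_isBalancedSign_indicator_ae_eq (hrev : κ.IsReversible μ)
    (herg : KErgodicMeasure μ (fun x => κ x)) :
    ∃ c, IsBalancedSign μ c ∧ ∀ C D, IsExchangePair κ μ C D →
      ∀ᵐ x ∂μ, C.indicator 1 x = μ.real C + (∫ y in C, c y ∂μ) * c x := by
  by_cases hB : ∃ B, IsExchangePair κ μ B Bᶜ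
  · obtain ⟨B, hB⟩ := hB
    have hBm := hB.measurableSet_left
    have hBhalf := hB.measureReal_eq_half herg.1
    have hc := isBalancedSign_two_mul_indicator_sub_one hBm hBhalf
    refine ⟨_, hc, fun C D hCD => ?_⟩
    rcases or_assoc.2 (hCD.measure_eq_zero_or_one_or_compl hrev herg) with h01 | hCC
    · exact hc.indicator_ae_eq_of_measure_eq_zero_or_one hCD.measurableSet_left h01
    rw [setIntegral_two_mul_indicator_sub_one hBm, hCC.measureReal_eq_half herg.1]
    rcases hCC.ae_eq_or_ae_eq_compl herg hB with hCB | hCB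
    · have hBC : μ.real (B ∩ C) = 1 / 2 := by
        rw [measureReal_congr ((EventuallyEq.refl _ B).inter hCB), inter_self, hBhalf]
      filter_upwards [indicator_ae_eq_of_ae_eq_set (f := (1 : S → ℝ)) hCB] with x hx
      rw [hBC, hx]
      ring
    · have hBC : μ.real (B ∩ C) = 0 := by
        rw [measureReal_congr ((EventuallyEq.refl _ B).inter hCB), inter_compl_self,
          measureReal_empty]
      filter_upwards [indicator_ae_eq_of_ae_eq_set (f := (1 : S → ℝ)) hCB] with x hx
      rw [hBC, hx]
      by_cases hxB : x ∈ B <;> norm_num [hxB]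
  · have hc : IsBalancedSign μ (0 : S → ℝ) := ⟨measurable_zero, .inl rfl⟩
    refine ⟨0, hc, fun C D hCD => ?_⟩
    refine hc.indicator_ae_eq_of_measure_eq_zero_or_one hCD.measurableSet_left ?_
    exact (or_assoc.2 (hCD.measure_eq_zero_or_one_or_compl hrev herg)).resolve_right
      fun hCC => hB ⟨C, hCC⟩

end BalancedSign

lemma isReversible_of_integral_mul_comm [TopologicalSpace S] [HasOuterApproxClosed S]
    [BorelSpace S] [SecondCountableTopology S] [IsFiniteMeasure μ] [IsMarkovKernel κ]
    (h : ∀ f g : BoundedContinuousFunction S ℝ,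
      ∫ x, f x * ∫ y, g y ∂(κ x) ∂μ = ∫ x, g x * ∫ y, f y ∂(κ x) ∂μ) :
    κ.IsReversible μ := by
  have hswap : μ ⊗ₘ κ = (μ ⊗ₘ κ).map Prod.swap := by
    refine Measure.ext_of_integral_mul_boundedContinuousFunction fun f g => ?_
    have hint (f g : BoundedContinuousFunction S ℝ) :
        Integrable (fun p : S × S => f p.1 * g p.2) (μ ⊗ₘ κ) := by
      refine Integrable.of_bound (by fun_prop) (‖f‖ * ‖g‖) (.of_forall fun p => ?_)
      rw [norm_mul]
      gcongr
      exacts [f.norm_coe_le_norm _, g.norm_coe_le_norm _]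
    have hcomm : (fun p : S × S => f p.swap.1 * g p.swap.2) = fun p => g p.1 * f p.2 :=
      funext fun p => mul_comm _ _
    rw [integral_map measurable_swap.aemeasurable (by fun_prop), hcomm,
      Measure.integral_compProd (hint f g), Measure.integral_compProd (hint g f)]
    simpa only [integral_const_mul] using h f g
  intro A B hA hB
  rw [← Measure.compProd_apply_prod hA hB, ← Measure.compProd_apply_prod hB hA, hswap,
    Measure.map_apply measurable_swap (hA.prod hB), preimage_swap_prod, ← hswap]

end ReversibleKernel

section UniformMeasure

instance : IsProbabilityMeasure m1 := by
  have : m1 = volume[|Ioo (-1 : ℝ) 1] := by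
    rw [ProbabilityTheory.cond, Real.volume_Ioo]
    norm_num [m1]
  rw [this]
  exact cond_isProbabilityMeasure_of_finite (by simp) (by simp)

lemma Reversible1.isReversible {q : Kernel ℝ ℝ} [IsMarkovKernel q] (h : Reversible1 q) :
    q.IsReversible m1 := by
  have bddCtsOn (f : BoundedContinuousFunction ℝ ℝ) : BddCtsOn (Ioo (-1 : ℝ) 1) f :=
    ⟨f.continuous.continuousOn, ‖f‖, fun x _ => f.norm_coe_le_norm x⟩
  exact isReversible_of_integral_mul_comm fun f g => h g f (bddCtsOn g) (bddCtsOn f)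

lemma ae_m1 : ae m1 = ae (volume.restrict (Ioo (-1 : ℝ) 1)) :=
  Measure.ae_ennreal_smul_measure_eq (by simp) _

lemma measurePreserving_neg_m1 : MeasurePreserving (fun x : ℝ => -x) m1 m1 := by
  have hpre : (fun x : ℝ => -x) ⁻¹' Ioo (-1) 1 = Ioo (-1) 1 := by simp
  have h := (Measure.measurePreserving_neg (volume : Measure ℝ)).restrict_preimage
    (measurableSet_Ioo (a := (-1 : ℝ)) (b := 1))
  exact (hpre ▸ h).smul_measure _

end UniformMeasure

section Ellipse

variable {γ : ℝ}

/-- Half the length of the chord `E_u`. -/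
def halfChord (γ u : ℝ) : ℝ := √(1 - u ^ 2 * Real.sin γ ^ 2)

/-- The chart `(u, x) ↦ (u, ℓ_u x)` from columns over `(-1, 1)` to the ellipse `E`. -/
def chordMap (γ : ℝ) (p : ℝ × ℝ) : ℝ × ℝ := (p.1, ellMap γ p.1 p.2)

/-- The projection of Lebesgue measure on `E` to the first coordinate: its density at `u` is the
length of the chord `E_u`, which is `0` for `|u| ≥ csc γ`. -/
def chordMeasure (γ : ℝ) : Measure ℝ :=
  volume.withDensity fun u => ENNReal.ofReal (2 * halfChord γ u)

instance : SFinite (chordMeasure γ) := by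
  unfold chordMeasure
  infer_instance

lemma continuous_halfChord : Continuous (halfChord γ) := by unfold halfChord; fun_prop

lemma halfChord_nonneg (u : ℝ) : 0 ≤ halfChord γ u := Real.sqrt_nonneg _

lemma halfChord_pos_iff {u : ℝ} : 0 < halfChord γ u ↔ u ^ 2 * Real.sin γ ^ 2 < 1 := by
  rw [halfChord, Real.sqrt_pos, sub_pos]

lemma halfChord_sq {u : ℝ} (h : 0 < halfChord γ u) :
    halfChord γ u ^ 2 = 1 - u ^ 2 * Real.sin γ ^ 2 :=
  Real.sq_sqrt (sub_nonneg.2 (halfChord_pos_iff.1 h).le)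

lemma ellMap_eq (u x : ℝ) : ellMap γ u x = -u * Real.cos γ + x * halfChord γ u := rfl

lemma ellInv_eq (u y : ℝ) : ellInv γ u y = (y + u * Real.cos γ) / halfChord γ u := rfl

lemma measurable_ellMap : Measurable fun p : ℝ × ℝ => ellMap γ p.1 p.2 := by
  unfold ellMap; fun_prop

lemma measurable_ellMap_right (u : ℝ) : Measurable (ellMap γ u) :=
  measurable_ellMap.comp measurable_prodMk_left

lemma measurable_ellInv : Measurable fun p : ℝ × ℝ => ellInv γ p.1 p.2 := by
  unfold ellInv; fun_prop

lemma measurable_chordMap : Measurable (chordMap γ) := measurable_fst.prodMk measurable_ellMap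

lemma measurable_chordMap_right (u : ℝ) : Measurable fun x => chordMap γ (u, x) :=
  measurable_chordMap.comp measurable_prodMk_left

lemma ellInv_ellMap {u : ℝ} (h : 0 < halfChord γ u) (x : ℝ) : ellInv γ u (ellMap γ u x) = x := by
  rw [ellInv_eq, ellMap_eq]
  field_simp
  ring

lemma mem_Eset_iff {u v : ℝ} :
    (u, v) ∈ Eset γ ↔ (v + u * Real.cos γ) ^ 2 < 1 - u ^ 2 * Real.sin γ ^ 2 := by
  rw [Eset, mem_ofPred_eq, Real.sin_sq]
  constructor <;> intro h <;> linarith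

lemma swap_mem_Eset {p : ℝ × ℝ} : p.swap ∈ Eset γ ↔ p ∈ Eset γ := by
  simp only [Eset, mem_ofPred_eq, Prod.fst_swap, Prod.snd_swap]
  constructor <;> intro h <;> linarith

lemma halfChord_fst_pos {p : ℝ × ℝ} (h : p ∈ Eset γ) : 0 < halfChord γ p.1 :=
  halfChord_pos_iff.2 (sub_pos.1 ((sq_nonneg _).trans_lt (mem_Eset_iff.1 h)))

lemma halfChord_snd_pos {p : ℝ × ℝ} (h : p ∈ Eset γ) : 0 < halfChord γ p.2 :=
  halfChord_fst_pos (swap_mem_Eset.2 h)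

lemma chordMap_mem_Eset_iff {u x : ℝ} (h : 0 < halfChord γ u) :
    chordMap γ (u, x) ∈ Eset γ ↔ x ∈ Ioo (-1 : ℝ) 1 := by
  rw [chordMap, mem_Eset_iff, ← halfChord_sq h, ellMap_eq, mem_Ioo, ← abs_lt,
    ← sq_lt_one_iff_abs_lt_one, ← mul_lt_iff_lt_one_left (pow_pos h 2), ← mul_pow]
  ring_nf

lemma isOpen_Eset : IsOpen (Eset γ) := isOpen_lt (by fun_prop) (by fun_prop)

lemma measurableSet_Eset : MeasurableSet (Eset γ) := isOpen_Eset.measurableSet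

lemma zero_mem_Eset : (0 : ℝ × ℝ) ∈ Eset γ := by simp [Eset]

lemma isPreconnected_Eset : IsPreconnected (Eset γ) := by
  have hstar : StarConvex ℝ 0 (Eset γ) := by
    refine starConvex_zero_iff.2 fun p hp t ht0 ht1 => ?_
    have hscale : (t • p).1 ^ 2 + 2 * Real.cos γ * (t • p).1 * (t • p).2 + (t • p).2 ^ 2 =
        t ^ 2 * (p.1 ^ 2 + 2 * Real.cos γ * p.1 * p.2 + p.2 ^ 2) := by
      simp only [Prod.smul_fst, Prod.smul_snd, smul_eq_mul]
      ring
    rw [Eset, mem_ofPred_eq, hscale]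
    rcases le_total 0 (p.1 ^ 2 + 2 * Real.cos γ * p.1 * p.2 + p.2 ^ 2) with h | h
    · exact (mul_le_of_le_one_left h (pow_le_one₀ ht0 ht1)).trans_lt hp
    · exact (mul_nonpos_of_nonneg_of_nonpos (sq_nonneg t) h).trans_lt one_pos
  exact (hstar.isPathConnected zero_mem_Eset).isConnected.isPreconnected

lemma volume_Eset_ne_zero : volume (Eset γ) ≠ 0 :=
  (isOpen_Eset.measure_pos volume ⟨0, zero_mem_Eset⟩).ne'

lemma volume_Eset_ne_top (hsin : Real.sin γ ≠ 0) : volume (Eset γ) ≠ ∞ := by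
  have hsin' : 0 < |Real.sin γ| := abs_pos.2 hsin
  have hfst {p : ℝ × ℝ} (hp : p ∈ Eset γ) : |p.1| ≤ |Real.sin γ|⁻¹ := by
    have h := halfChord_pos_iff.1 (halfChord_fst_pos hp)
    rw [← mul_pow, sq_lt_one_iff_abs_lt_one, abs_mul] at h
    exact ((lt_div_iff₀ hsin').2 h).le.trans_eq (one_div _)
  refine (Metric.isBounded_closedBall (x := 0) (r := |Real.sin γ|⁻¹) |>.subset fun p hp => ?_)
    |>.measure_lt_top.ne
  rw [mem_closedBall_zero_iff, Prod.norm_def]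
  exact max_le (hfst hp) (hfst (swap_mem_Eset.2 hp))

lemma smul_map_ellMap_volume {u : ℝ} (h : 0 < halfChord γ u) :
    ENNReal.ofReal (halfChord γ u) • volume.map (ellMap γ u) = volume := by
  have hscale := Real.smul_map_volume_mul_right h.ne'
  rw [abs_of_pos h] at hscale
  have hcomp : ellMap γ u = (fun y => -u * Real.cos γ + y) ∘ fun x => x * halfChord γ u := rfl
  rw [hcomp, ← Measure.map_map (by fun_prop) (by fun_prop), ← Measure.map_smul,
    hscale, map_add_left_eq_self]

lemma volume_restrict_column (u : ℝ) :
    volume.restrict (Prod.mk u ⁻¹' Eset γ) =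
      ENNReal.ofReal (2 * halfChord γ u) • m1.map (ellMap γ u) := by
  rcases (halfChord_nonneg u).lt_or_eq with h | h
  · have hpre : ellMap γ u ⁻¹' (Prod.mk u ⁻¹' Eset γ) = Ioo (-1) 1 :=
      ext fun x => chordMap_mem_Eset_iff h
    have hE : MeasurableSet (Prod.mk u ⁻¹' Eset γ) := measurable_prodMk_left measurableSet_Eset
    rw [m1, Measure.map_smul, smul_smul, ENNReal.ofReal_mul zero_le_two, mul_right_comm]
    conv_lhs => rw [← smul_map_ellMap_volume h]
    rw [Measure.restrict_smul, Measure.restrict_map (measurable_ellMap_right u) hE, hpre]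
    simp [ENNReal.mul_inv_cancel]
  · have hempty : Prod.mk u ⁻¹' Eset γ = ∅ :=
      eq_empty_of_forall_notMem fun v hv => (halfChord_fst_pos hv).ne h
    simp [hempty, ← h]

lemma measurePreserving_chordMap :
    MeasurePreserving (chordMap γ) ((chordMeasure γ).prod m1) (volume.restrict (Eset γ)) := by
  refine ⟨measurable_chordMap, Measure.ext fun S hS => ?_⟩
  have hdens : Measurable fun u => ENNReal.ofReal (2 * halfChord γ u) :=
    (continuous_halfChord.measurable.const_mul 2).ennreal_ofReal
  have hS' := measurable_chordMap (γ := γ) hS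
  rw [Measure.map_apply measurable_chordMap hS, Measure.prod_apply hS', chordMeasure,
    lintegral_withDensity_eq_lintegral_mul _ hdens (measurable_measure_prodMk_left hS'),
    Measure.restrict_apply hS, Measure.volume_eq_prod,
    Measure.prod_apply (hS.inter measurableSet_Eset)]
  refine lintegral_congr fun u => ?_
  rw [preimage_inter, ← Measure.restrict_apply (measurable_prodMk_left hS),
    volume_restrict_column, Measure.smul_apply,
    Measure.map_apply (measurable_ellMap_right u) (measurable_prodMk_left hS)]
  rfl

lemma ae_restrict_Eset_iff {P : ℝ × ℝ → Prop} (hP : MeasurableSet {p | P p}) :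
    (∀ᵐ p ∂volume.restrict (Eset γ), P p) ↔
      ∀ᵐ u ∂chordMeasure γ, ∀ᵐ x ∂m1, P (chordMap γ (u, x)) := by
  rw [← measurePreserving_chordMap.map_eq,
    ae_map_iff measurable_chordMap.aemeasurable hP]
  exact Measure.ae_prod_mem_iff_ae_ae_mem (measurable_chordMap hP)

lemma ae_chordMeasure_iff {P : ℝ → Prop} :
    (∀ᵐ u ∂chordMeasure γ, P u) ↔ ∀ᵐ u, 0 < halfChord γ u → P u := by
  rw [chordMeasure, ae_withDensity_iff
    (continuous_halfChord.measurable.const_mul 2).ennreal_ofReal]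
  simp [ENNReal.ofReal_eq_zero, not_le]

lemma measurePreserving_swap_restrict_Eset :
    MeasurePreserving Prod.swap (volume.restrict (Eset γ)) (volume.restrict (Eset γ)) := by
  have hpre : Prod.swap ⁻¹' Eset γ = Eset γ := ext fun _ => swap_mem_Eset
  have h := (Measure.measurePreserving_swap (μ := (volume : Measure ℝ))
    (ν := (volume : Measure ℝ))).restrict_preimage (measurableSet_Eset (γ := γ))
  rwa [hpre] at h

end Ellipse

section Walk

variable {γ : ℝ} {q : Kernel ℝ ℝ}

/-- The column move of the alternating walk on `E`: from `(u, v)` to `(u, ℓ_u X')`, where `X'` has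
law `q(-ℓ_u⁻¹ v, ·)`. The row move is its conjugate by the swap of coordinates. -/
def columnKernel (γ : ℝ) (q : Kernel ℝ ℝ) : Kernel (ℝ × ℝ) (ℝ × ℝ) :=
  ((Kernel.deterministic Prod.fst measurable_fst) ×ₖ
    q.comap (fun p : ℝ × ℝ => -ellInv γ p.1 p.2) measurable_ellInv.neg).map (chordMap γ)

/-- `Qfun γ q` as a measurable kernel. -/
def walkKernel (γ : ℝ) (q : Kernel ℝ ℝ) : Kernel (ℝ × ℝ × ℝ) (ℝ × ℝ × ℝ) :=
  Kernel.piecewise (s := {w | w.2.2 = -1})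
    (measurableSet_eq_fun measurable_snd.snd measurable_const)
    (((columnKernel γ q).comap (fun w => (w.2.1, w.1)) (by fun_prop)).map
      fun p => (p.2, p.1, (1 : ℝ)))
    (((columnKernel γ q).comap (fun w => (w.1, w.2.1)) (by fun_prop)).map
      fun p => (p.1, p.2, (-1 : ℝ)))

instance [IsMarkovKernel q] : IsMarkovKernel (columnKernel γ q) :=
  Kernel.IsMarkovKernel.map _ measurable_chordMap

lemma columnKernel_apply [IsMarkovKernel q] (p : ℝ × ℝ) :
    columnKernel γ q p = (q (-ellInv γ p.1 p.2)).map fun x => chordMap γ (p.1, x) := by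
  rw [columnKernel, Kernel.map_apply _ measurable_chordMap, Kernel.prod_apply,
    Kernel.deterministic_apply, Kernel.comap_apply, Measure.dirac_prod,
    Measure.map_map measurable_chordMap measurable_prodMk_left]
  rfl

lemma walkKernel_apply [IsMarkovKernel q] (w : ℝ × ℝ × ℝ) : walkKernel γ q w = Qfun γ q w := by
  rw [walkKernel, Kernel.piecewise_apply, Qfun]
  refine if_congr Iff.rfl ?_ ?_
  all_goals
    rw [Kernel.map_apply _ (by fun_prop), Kernel.comap_apply, columnKernel_apply,
      Measure.map_map (by fun_prop) (measurable_chordMap_right _)]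
    rfl

lemma columnKernel_chordMap_apply [IsMarkovKernel q] {u : ℝ} (hu : 0 < halfChord γ u) (x : ℝ)
    {B : Set (ℝ × ℝ)} (hB : MeasurableSet B) :
    columnKernel γ q (chordMap γ (u, x)) B = q (-x) {y | chordMap γ (u, y) ∈ B} := by
  rw [columnKernel_apply, chordMap, ellInv_ellMap hu,
    Measure.map_apply (measurable_chordMap_right _) hB]
  rfl

lemma kInvariantMeasure_columnKernel [IsMarkovKernel q]
    (hinv : KInvariantMeasure m1 (fun x => q x)) :
    KInvariantMeasure (volume.restrict (Eset γ)) (fun p => columnKernel γ q p) := by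
  intro B hB
  have hB' := measurable_chordMap (γ := γ) hB
  have hκ := (columnKernel γ q).measurable_coe hB
  rw [← measurePreserving_chordMap.lintegral_comp hκ,
    lintegral_prod (fun p => columnKernel γ q (chordMap γ p) B)
      (hκ.comp measurable_chordMap).aemeasurable,
    ← measurePreserving_chordMap.measure_preimage hB.nullMeasurableSet, Measure.prod_apply hB']
  refine lintegral_congr_ae (ae_chordMeasure_iff.2 (.of_forall fun u hu => ?_))
  have hsection : MeasurableSet {y | chordMap γ (u, y) ∈ B} := measurable_prodMk_left hB'
  calc ∫⁻ x, columnKernel γ q (chordMap γ (u, x)) B ∂m1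
      = ∫⁻ x, q (-x) {y | chordMap γ (u, y) ∈ B} ∂m1 :=
        lintegral_congr fun x => columnKernel_chordMap_apply hu x hB
    _ = ∫⁻ x, q x {y | chordMap γ (u, y) ∈ B} ∂m1 :=
        measurePreserving_neg_m1.lintegral_comp (q.measurable_coe hsection)
    _ = m1 {y | chordMap γ (u, y) ∈ B} := hinv _ hsection

lemma IsExchangePair.column [IsMarkovKernel q] {B D : Set (ℝ × ℝ)}
    (h : IsExchangePair (columnKernel γ q) (volume.restrict (Eset γ)) B D) :
    ∀ᵐ u ∂chordMeasure γ,
      IsExchangePair q m1 {x | chordMap γ (u, x) ∈ B} {x | chordMap γ (u, -x) ∈ D} := by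
  have hD := h.measurableSet_right
  have hae := (ae_restrict_Eset_iff (measurableSet_eq_fun
    ((columnKernel γ q).measurable_coe h.measurableSet_left)
    (measurable_one.indicator hD))).1 h.ae_eq_indicator
  filter_upwards [hae, ae_chordMeasure_iff.2 (.of_forall fun _ => id)] with u hu hpos
  refine ⟨measurable_chordMap_right u h.measurableSet_left,
    (measurable_chordMap_right u).comp measurable_neg hD, ?_⟩
  filter_upwards [measurePreserving_neg_m1.quasiMeasurePreserving.ae hu] with x hx
  rwa [columnKernel_chordMap_apply hpos _ h.measurableSet_left, neg_neg] at hx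

variable {A : Set (ℝ × ℝ × ℝ)}

lemma measurableSet_Fplus (hA : MeasurableSet A) : MeasurableSet (Fplus A) :=
  measurableSet_preimage (by fun_prop) hA

lemma measurableSet_Fminus (hA : MeasurableSet A) : MeasurableSet (Fminus A) :=
  measurableSet_preimage (by fun_prop) hA

lemma m2_eq : m2 γ = (2 : ℝ≥0∞)⁻¹ •
    (volume[|Eset γ].map (fun p => (p.1, p.2, (1 : ℝ))) +
      volume[|Eset γ].map fun p => (p.1, p.2, (-1 : ℝ))) := by
  have hmap (s : ℝ) : (volume[|Eset γ].prod (Measure.dirac s)).map (fun p => (p.1.1, p.1.2, p.2)) =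
      volume[|Eset γ].map fun p => (p.1, p.2, s) := by
    rw [Measure.prod_dirac, Measure.map_map (by fun_prop) (by fun_prop)]
    rfl
  rw [m2, ← ProbabilityTheory.cond, Measure.prod_smul_right, Measure.prod_add, Measure.map_smul,
    Measure.map_add _ _ (by fun_prop), hmap, hmap]

lemma m2_apply (hA : MeasurableSet A) :
    m2 γ A = 2⁻¹ * (volume[|Eset γ] (Fplus A) + volume[|Eset γ] (Fminus A)) := by
  rw [m2_eq, Measure.smul_apply, Measure.add_apply, Measure.map_apply (by fun_prop) hA,
    Measure.map_apply (by fun_prop) hA]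
  rfl

lemma isProbabilityMeasure_m2 (hsin : Real.sin γ ≠ 0) : IsProbabilityMeasure (m2 γ) := by
  have := cond_isProbabilityMeasure_of_finite (volume_Eset_ne_zero (γ := γ))
    (volume_Eset_ne_top hsin)
  refine ⟨?_⟩
  rw [m2_apply .univ]
  simp [Fplus, Fminus, one_add_one_eq_two, ENNReal.inv_mul_cancel]

lemma ae_m2_iff (hsin : Real.sin γ ≠ 0) {P : ℝ × ℝ × ℝ → Prop} (hP : MeasurableSet {w | P w}) :
    (∀ᵐ w ∂m2 γ, P w) ↔ (∀ᵐ p ∂volume.restrict (Eset γ), P (p.1, p.2, 1)) ∧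
      ∀ᵐ p ∂volume.restrict (Eset γ), P (p.1, p.2, -1) := by
  rw [m2_eq, Measure.ae_ennreal_smul_measure_eq (by simp), ae_add_measure_iff,
    ae_map_iff (by fun_prop) hP, ae_map_iff (by fun_prop) hP, ProbabilityTheory.cond,
    Measure.ae_ennreal_smul_measure_eq (ENNReal.inv_ne_zero.2 (volume_Eset_ne_top hsin))]

lemma Qfun_one_apply [IsMarkovKernel q] (p : ℝ × ℝ) (hA : MeasurableSet A) :
    Qfun γ q (p.1, p.2, 1) A = columnKernel γ q p (Fminus A) := by
  rw [columnKernel_apply, Measure.map_apply (measurable_chordMap_right _) (measurableSet_Fminus hA),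
    Qfun, if_neg (by norm_num),
    Measure.map_apply (measurable_const.prodMk ((measurable_ellMap_right _).prodMk
      measurable_const)) hA]
  rfl

lemma Qfun_neg_one_apply [IsMarkovKernel q] (p : ℝ × ℝ) (hA : MeasurableSet A) :
    Qfun γ q (p.1, p.2, -1) A = columnKernel γ q p.swap (Prod.swap ⁻¹' Fplus A) := by
  rw [columnKernel_apply, Measure.map_apply (measurable_chordMap_right _)
      (measurable_swap (measurableSet_Fplus hA)), Qfun, if_pos rfl,
    Measure.map_apply ((measurable_ellMap_right _).prodMk measurable_const) hA]
  rfl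

lemma kInvariantMeasure_m2 [IsMarkovKernel q] (hinv : KInvariantMeasure m1 (fun x => q x)) :
    KInvariantMeasure (m2 γ) (Qfun γ q) := by
  intro A hA
  have hcol (B : Set (ℝ × ℝ)) (hB : MeasurableSet B) :
      ∫⁻ p, columnKernel γ q p B ∂volume[|Eset γ] = volume[|Eset γ] B := by
    rw [ProbabilityTheory.cond, lintegral_smul_measure, kInvariantMeasure_columnKernel hinv B hB,
      Measure.smul_apply]
  have hswap : MeasurePreserving Prod.swap volume[|Eset γ] volume[|Eset γ] :=
    measurePreserving_swap_restrict_Eset.smul_measure _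
  have hplus := measurableSet_Fplus hA
  have hrow : ∫⁻ p : ℝ × ℝ, columnKernel γ q p.swap (Prod.swap ⁻¹' Fplus A) ∂volume[|Eset γ] =
      volume[|Eset γ] (Fplus A) := by
    rw [hswap.lintegral_comp ((columnKernel γ q).measurable_coe (measurable_swap hplus)),
      hcol _ (measurable_swap hplus), hswap.measure_preimage hplus.nullMeasurableSet]
  have hQ := (walkKernel γ q).measurable_coe hA
  simp only [walkKernel_apply] at hQ
  rw [m2_apply hA, ← hrow, ← hcol _ (measurableSet_Fminus hA), m2_eq, lintegral_smul_measure,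
    lintegral_add_measure, lintegral_map hQ (by fun_prop), lintegral_map hQ (by fun_prop)]
  simp only [Qfun_one_apply _ hA, Qfun_neg_one_apply _ hA, smul_eq_mul, add_comm]

lemma KInvariantSet.isExchangePair_column_row [IsMarkovKernel q] (hsin : Real.sin γ ≠ 0)
    (hinv : KInvariantMeasure m1 (fun x => q x)) (hA : MeasurableSet A)
    (h : KInvariantSet (m2 γ) (Qfun γ q) A) :
    IsExchangePair (columnKernel γ q) (volume.restrict (Eset γ)) (Fminus A) (Fplus A) ∧
      IsExchangePair (columnKernel γ q) (volume.restrict (Eset γ)) (Prod.swap ⁻¹' Fplus A)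
        (Prod.swap ⁻¹' Fminus A) := by
  have := isProbabilityMeasure_m2 hsin
  have hplus := measurableSet_Fplus hA
  have hminus := measurableSet_Fminus hA
  have hpair : IsExchangePair (walkKernel γ q) (m2 γ) A A := by
    refine KInvariantSet.isExchangePair ?_ hA ?_ <;> simp only [walkKernel_apply]
    exacts [kInvariantMeasure_m2 hinv, h]
  obtain ⟨hone, hneg⟩ := (ae_m2_iff hsin (measurableSet_eq_fun
    ((walkKernel γ q).measurable_coe hA) (measurable_one.indicator hA))).1 hpair.ae_eq_indicator
  simp only [walkKernel_apply, Qfun_one_apply _ hA, Qfun_neg_one_apply _ hA] at hone hneg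
  exact ⟨⟨hminus, hplus, hone⟩, measurable_swap hplus, measurable_swap hminus,
    measurePreserving_swap_restrict_Eset.quasiMeasurePreserving.ae hneg⟩

end Walk

section RowChart

variable {γ x u v : ℝ}

lemma contDiffAt_halfChord {n : WithTop ℕ∞} (h : 0 < halfChord γ u) :
    ContDiffAt ℝ n (halfChord γ) u :=
  ContDiffAt.sqrt (by fun_prop) (sub_pos.2 (halfChord_pos_iff.1 h)).ne'

lemma hasDerivAt_halfChord (h : 0 < halfChord γ u) :
    HasDerivAt (halfChord γ) (-(u * Real.sin γ ^ 2) / halfChord γ u) u := by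
  have hquad : HasDerivAt (fun u : ℝ => 1 - u ^ 2 * Real.sin γ ^ 2)
      (-(2 * u * Real.sin γ ^ 2)) u := by
    simpa using ((hasDerivAt_pow 2 u).mul_const (Real.sin γ ^ 2)).const_sub 1
  refine (hquad.sqrt (sub_pos.2 (halfChord_pos_iff.1 h)).ne').congr_deriv ?_
  rw [← halfChord, mul_assoc, ← mul_neg, mul_div_mul_left _ _ two_ne_zero]

lemma hasDerivAt_ellMap (hv : 0 < halfChord γ v) :
    HasDerivAt (fun v => ellMap γ v x)
      (-Real.cos γ - x * v * Real.sin γ ^ 2 / halfChord γ v) v :=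
  (((hasDerivAt_id v).neg.mul_const (Real.cos γ)).add
    ((hasDerivAt_halfChord hv).const_mul x)).congr_deriv (by ring)

lemma halfChord_ellMap_pos (hx : x ∈ Ioo (-1 : ℝ) 1) (hv : 0 < halfChord γ v) :
    0 < halfChord γ (ellMap γ v x) :=
  halfChord_snd_pos ((chordMap_mem_Eset_iff hv).2 hx)

lemma hasDerivAt_ellInv_ellMap (hx : x ∈ Ioo (-1 : ℝ) 1) (hv : 0 < halfChord γ v) :
    HasDerivAt (fun v => ellInv γ (ellMap γ v x) v)
      (Real.sin γ ^ 2 * (1 - x ^ 2) / halfChord γ (ellMap γ v x) ^ 3) v := by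
  have hu := halfChord_ellMap_pos hx hv
  have hdu := hasDerivAt_ellMap (x := x) hv
  have hdR : HasDerivAt (fun v => halfChord γ (ellMap γ v x)) _ v :=
    HasDerivAt.comp (h₂ := halfChord γ) v (hasDerivAt_halfChord hu) hdu
  refine (((hasDerivAt_id v).add (hdu.mul_const (Real.cos γ))).div hdR hu.ne').congr_deriv ?_
  have hr := halfChord_sq hv
  have hR := halfChord_sq hu
  have hsc := Real.sin_sq_add_cos_sq γ
  simp only [id_eq, Pi.add_apply]
  generalize halfChord γ (ellMap γ v x) = R at hu hR ⊢
  rw [ellMap_eq] at hR ⊢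
  generalize halfChord γ v = r at hv hr hR ⊢
  field_simp
  linear_combination
    (r + Real.cos γ * (-(Real.cos γ * r) - x * v * Real.sin γ ^ 2)) * hR -
      (r * (Real.sin γ ^ 2 * x ^ 2 + Real.cos γ ^ 2) +
        Real.cos γ * (-(Real.cos γ * r) - x * v * Real.sin γ ^ 2)) * hr - r * hsc

lemma contDiffAt_ellMap {n : WithTop ℕ∞} (hv : 0 < halfChord γ v) :
    ContDiffAt ℝ n (fun p : ℝ × ℝ => ellMap γ p.2 p.1) (x, v) := by
  have hr : ContDiffAt ℝ n (fun p : ℝ × ℝ => halfChord γ p.2) (x, v) :=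
    ContDiffAt.comp (g := halfChord γ) (x, v) (contDiffAt_halfChord hv) contDiffAt_snd
  exact (contDiffAt_snd.neg.mul contDiffAt_const).add (contDiffAt_fst.mul hr)

lemma contDiffAt_ellInv_ellMap {n : WithTop ℕ∞} (hx : x ∈ Ioo (-1 : ℝ) 1)
    (hv : 0 < halfChord γ v) :
    ContDiffAt ℝ n (fun p : ℝ × ℝ => ellInv γ (ellMap γ p.2 p.1) p.2) (x, v) := by
  have hpos := halfChord_ellMap_pos hx hv
  have hu : ContDiffAt ℝ n (fun p : ℝ × ℝ => ellMap γ p.2 p.1) (x, v) := contDiffAt_ellMap hv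
  have hR : ContDiffAt ℝ n (fun p : ℝ × ℝ => halfChord γ (ellMap γ p.2 p.1)) (x, v) :=
    ContDiffAt.comp (g := halfChord γ) (x, v) (contDiffAt_halfChord hpos) hu
  exact (contDiffAt_snd.add (hu.mul contDiffAt_const)).div hR hpos.ne'

lemma ae_deriv_ellMap_ne_zero (hcos : Real.cos γ ≠ 0) (x : ℝ) :
    ∀ᵐ v, 0 < halfChord γ v → deriv (fun v => ellMap γ v x) v ≠ 0 := by
  set D := Real.sin γ ^ 2 * (Real.cos γ ^ 2 + x ^ 2 * Real.sin γ ^ 2)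
  have hfinite : {v : ℝ | v ^ 2 = Real.cos γ ^ 2 / D}.Finite :=
    (toFinite {√(Real.cos γ ^ 2 / D), -√(Real.cos γ ^ 2 / D)}).subset fun v hv => by
      rw [mem_ofPred_eq] at hv
      refine sq_eq_sq_iff_eq_or_eq_neg.1 ?_
      rw [Real.sq_sqrt (hv ▸ sq_nonneg v), hv]
  filter_upwards [hfinite.countable.ae_notMem volume] with v hv hpos hcrit
  rw [(hasDerivAt_ellMap hpos).deriv] at hcrit
  have hmul : x * v * Real.sin γ ^ 2 = -Real.cos γ * halfChord γ v := by
    field_simp at hcrit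
    linarith
  have hsq : v ^ 2 * D = Real.cos γ ^ 2 := by
    linear_combination (x * v * Real.sin γ ^ 2 - Real.cos γ * halfChord γ v) * hmul +
      Real.cos γ ^ 2 * halfChord_sq hpos
  have hD : D ≠ 0 := right_ne_zero_of_mul (hsq ▸ pow_ne_zero 2 hcos)
  exact hv ((eq_div_iff hD).2 hsq)

end RowChart

section Rigidity

variable {γ : ℝ} {a b c a' b' c' : ℝ → ℝ} {f : ℝ × ℝ → ℝ}

/-- The function on `E` that equals `a u + b u * c x` in the chart `(u, ℓ_u x)`. -/
def columnAffine (γ : ℝ) (a b c : ℝ → ℝ) (p : ℝ × ℝ) : ℝ := a p.1 + b p.1 * c (ellInv γ p.1 p.2)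

/-- On almost every column of `E`, the function `f` is affine in `c x`, where `x` is the chord
coordinate. -/
def IsColumnAffine (γ : ℝ) (c : ℝ → ℝ) (f : ℝ × ℝ → ℝ) : Prop :=
  ∃ a b : ℝ → ℝ, MeasurableUnitBounded a ∧ MeasurableUnitBounded b ∧
    f =ᵐ[volume.restrict (Eset γ)] columnAffine γ a b c

lemma measurable_columnAffine (ha : Measurable a) (hb : Measurable b) (hc : Measurable c) :
    Measurable (columnAffine γ a b c) :=
  (ha.comp measurable_fst).add ((hb.comp measurable_fst).mul (hc.comp measurable_ellInv))

lemma columnAffine_chordMap {u : ℝ} (hu : 0 < halfChord γ u) (x : ℝ) :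
    columnAffine γ a b c (chordMap γ (u, x)) = a u + b u * c x := by
  rw [columnAffine, chordMap, ellInv_ellMap hu]

lemma measurable_swap_chordMap_left (x : ℝ) : Measurable fun v => (chordMap γ (v, x)).swap :=
  measurable_swap.comp (measurable_chordMap.comp measurable_prodMk_right)

lemma MeasurableUnitBounded.locallyIntegrable (ha : MeasurableUnitBounded a) :
    LocallyIntegrable a :=
  (memLp_top_of_bound ha.measurable.aestronglyMeasurable 1
    (.of_forall ha.norm_le_one)).locallyIntegrable le_top

lemma eventually_smallSets_tendsto_lintegral_enorm_columnAffine_sub (hsin : Real.sin γ ≠ 0)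
    (ha : MeasurableUnitBounded a) (hb : MeasurableUnitBounded b) (hc : MeasurableUnitBounded c)
    {x₀ v₀ : ℝ} (hx₀ : x₀ ∈ Ioo (-1 : ℝ) 1) (hv₀ : 0 < halfChord γ v₀)
    (hcrit : deriv (fun v => ellMap γ v x₀) v₀ ≠ 0) :
    ∀ᶠ J in (𝓝 v₀).smallSets, Tendsto
      (fun x => ∫⁻ v in J, ‖columnAffine γ a b c (chordMap γ (v, x)).swap -
        columnAffine γ a b c (chordMap γ (v, x₀)).swap‖ₑ) (𝓝 x₀) (𝓝 0) := by
  have hu (x : ℝ) : Measurable fun v => ellMap γ v x :=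
    measurable_fst.comp (measurable_swap_chordMap_left x)
  have hy (x : ℝ) : Measurable fun v => ellInv γ (ellMap γ v x) v :=
    measurable_ellInv.comp (measurable_swap_chordMap_left x)
  have hderiv : deriv (fun v => ellInv γ (ellMap γ v x₀) v) v₀ ≠ 0 := by
    rw [(hasDerivAt_ellInv_ellMap hx₀ hv₀).deriv]
    have := halfChord_ellMap_pos hx₀ hv₀
    have := sub_pos.2 ((sq_lt_one_iff_abs_lt_one x₀).2 (abs_lt.2 hx₀))
    positivity
  filter_upwards [eventually_smallSets_tendsto_lintegral_enorm_comp_sub (E := ℝ) hu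
      (contDiffAt_ellMap hv₀) hcrit,
    eventually_smallSets_tendsto_lintegral_enorm_comp_sub (E := ℝ) hy
      (contDiffAt_ellInv_ellMap hx₀ hv₀) hderiv] with J hJu hJy
  have hprod := tendsto_lintegral_enorm_mul_sub ENNReal.one_ne_top
    (fun x => (hb.measurable.comp (hu x)).aestronglyMeasurable)
    (hb.measurable.comp (hu x₀)).aestronglyMeasurable (fun _ _ => hc.enorm_le_one _)
    (fun _ => hb.enorm_le_one _) (hJu b hb.locallyIntegrable) (hJy c hc.locallyIntegrable)
  have hsum := (hJu a ha.locallyIntegrable).add hprod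
  rw [add_zero] at hsum
  refine tendsto_of_tendsto_of_tendsto_of_le_of_le tendsto_const_nhds hsum (fun _ => zero_le)
    fun x => ?_
  have hm : Measurable fun v => ‖a (ellMap γ v x) - a (ellMap γ v x₀)‖ₑ :=
    ((ha.measurable.comp (hu x)).sub (ha.measurable.comp (hu x₀))).enorm
  dsimp only
  rw [← lintegral_add_left hm]
  exact lintegral_mono fun v => (enorm_add_le _ _).trans_eq' (by
    simp only [columnAffine, chordMap, Prod.swap, Function.comp_apply, add_sub_add_comm])

lemma ae_ae_chordMap_of_ae_restrict_Eset {P : ℝ × ℝ → Prop}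
    (h : ∀ᵐ p ∂volume.restrict (Eset γ), P p) :
    ∀ᵐ x ∂m1, ∀ᵐ u ∂chordMeasure γ, P (chordMap γ (u, x)) :=
  Measure.ae_ae_of_ae_prod ((measurePreserving_chordMap.comp
    Measure.measurePreserving_swap).quasiMeasurePreserving.ae h)

lemma exists_isOpen_tendsto_lintegral_enorm_columnAffine_sub (hsin : Real.sin γ ≠ 0)
    (hcos : Real.cos γ ≠ 0) (ha' : MeasurableUnitBounded a') (hb' : MeasurableUnitBounded b')
    (hc' : MeasurableUnitBounded c') (hb : Measurable b)
    (hb0 : ¬ ∀ᵐ u ∂chordMeasure γ, b u = 0) {x₀ : ℝ} (hx₀ : x₀ ∈ Ioo (-1 : ℝ) 1) :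
    ∃ J, IsOpen J ∧ (∀ v ∈ J, 0 < halfChord γ v) ∧ ∫⁻ v in J, ‖b v‖ₑ ≠ 0 ∧ Tendsto
      (fun x => ∫⁻ v in J, ‖columnAffine γ a' b' c' (chordMap γ (v, x)).swap -
        columnAffine γ a' b' c' (chordMap γ (v, x₀)).swap‖ₑ) (𝓝 x₀) (𝓝 0) := by
  have hs0 : volume {v | 0 < halfChord γ v ∧ b v ≠ 0 ∧ deriv (fun v => ellMap γ v x₀) v ≠ 0}
      ≠ 0 := fun h0 => hb0 <| ae_chordMeasure_iff.2 <| by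
    filter_upwards [measure_eq_zero_iff_ae_notMem.1 h0, ae_deriv_ellMap_ne_zero hcos x₀]
      with v hv hcrit hpos
    by_contra hbv
    exact hv ⟨hpos, hbv, hcrit hpos⟩
  obtain ⟨v₀, ⟨hv₀, -, hcrit⟩, hv₀s⟩ := exists_mem_forall_mem_nhdsWithin_pos_measure hs0
  obtain ⟨t, ht, htlim⟩ := eventually_smallSets.1
    (eventually_smallSets_tendsto_lintegral_enorm_columnAffine_sub hsin ha' hb' hc' hx₀ hv₀ hcrit)
  have hpos : ∀ᶠ v in 𝓝 v₀, 0 < halfChord γ v :=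
    continuous_halfChord.continuousAt.eventually_const_lt hv₀
  obtain ⟨J, hJ, hJo, hv₀J⟩ := mem_nhds_iff.1 (inter_mem ht hpos)
  refine ⟨J, hJo, fun v hv => (hJ hv).2, fun h0 => ?_, htlim J fun v hv => (hJ hv).1⟩
  rw [setLIntegral_eq_zero_iff hJo.measurableSet hb.enorm] at h0
  refine (hv₀s _ (inter_mem_nhdsWithin _ (hJo.mem_nhds hv₀J))).ne' ?_
  exact measure_eq_zero_iff_ae_notMem.2
    (h0.mono fun v hv hvs => hvs.1.2.1 (enorm_eq_zero.1 (hv hvs.2)))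

lemma eventuallyConst_of_comp_swap_ae_eq_columnAffine (hsin : Real.sin γ ≠ 0)
    (hcos : Real.cos γ ≠ 0) (ha' : MeasurableUnitBounded a') (hb' : MeasurableUnitBounded b')
    (hc' : MeasurableUnitBounded c') (hb : Measurable b)
    (hb0 : ¬ ∀ᵐ u ∂chordMeasure γ, b u = 0) (hc : ∀ x, c x = 1 ∨ c x = -1)
    (h : columnAffine γ a' b' c' ∘ Prod.swap =ᵐ[volume.restrict (Eset γ)] columnAffine γ a b c) :
    EventuallyConst c (ae m1) := by
  let F (x v : ℝ) : ℝ := columnAffine γ a' b' c' (chordMap γ (v, x)).swap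
  have hFm (x : ℝ) : Measurable (F x) :=
    (measurable_columnAffine ha'.measurable hb'.measurable hc'.measurable).comp
      (measurable_swap_chordMap_left x)
  have hF : ∀ᵐ x ∂volume.restrict (Ioo (-1) 1), ∀ᵐ v, 0 < halfChord γ v →
      F x v = a v + b v * c x := by
    rw [← ae_m1]
    filter_upwards [ae_ae_chordMap_of_ae_restrict_Eset h] with x hx
    filter_upwards [ae_chordMeasure_iff.1 hx] with v hv hpos
      using (hv hpos).trans (columnAffine_chordMap hpos x)
  rw [ae_m1]
  refine eventuallyConst_ae_restrict_of_isPreconnected isPreconnected_Ioo fun x₀ hx₀ => ?_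
  obtain ⟨J, hJo, hJpos, hbJ, hJlim⟩ :=
    exists_isOpen_tendsto_lintegral_enorm_columnAffine_sub hsin hcos ha' hb' hc' hb hb0 hx₀
  have hFJ : ∀ᵐ x ∂volume.restrict (Ioo (-1) 1), ∀ᵐ v ∂volume.restrict J,
      F x v = a v + b v * c x := hF.mono fun x hx =>
    (ae_restrict_iff' hJo.measurableSet).2 (hx.mono fun v hv hvJ => hv (hJpos v hvJ))
  obtain ⟨U, hU, hUc⟩ := exists_eventuallyConst_of_tendsto_lintegral_enorm_sub hc
    (fun x => (hFm x).aestronglyMeasurable) hFJ hbJ hJlim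
  rw [Measure.restrict_restrict' measurableSet_Ioo] at hUc
  exact ⟨_, inter_mem hU (isOpen_Ioo.mem_nhds hx₀), hUc⟩

lemma IsColumnAffine.exists_ae_eq_comp_snd (hsin : Real.sin γ ≠ 0) (hcos : Real.cos γ ≠ 0)
    (hc : IsBalancedSign m1 c) (hc' : MeasurableUnitBounded c')
    (hf : IsColumnAffine γ c' f) (hfs : IsColumnAffine γ c (f ∘ Prod.swap)) :
    ∃ a : ℝ → ℝ, ∀ᵐ p ∂volume.restrict (Eset γ), f p = a p.2 := by
  obtain ⟨a', b', ha', hb', hf'⟩ := hf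
  obtain ⟨a, b, -, hb, hfs⟩ := hfs
  have hswap := (measurePreserving_swap_restrict_Eset (γ := γ)).quasiMeasurePreserving
  suffices h : columnAffine γ a b c =ᵐ[volume.restrict (Eset γ)] fun p => a p.1 from
    ⟨a, hswap.ae (hfs.trans h)⟩
  rcases hc.eq_zero_or with rfl | ⟨hsign, -⟩
  · exact .of_forall fun p => by simp [columnAffine]
  have hrow : f ∘ Prod.swap =ᵐ[volume.restrict (Eset γ)] columnAffine γ a' b' c' ∘ Prod.swap :=
    hswap.ae hf'
  have hb0 : ∀ᵐ u ∂chordMeasure γ, b u = 0 := by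
    by_contra hb0
    have hc0 := hc.eq_zero_of_eventuallyConst <| eventuallyConst_of_comp_swap_ae_eq_columnAffine
      hsin hcos ha' hb' hc' hb.measurable hb0 hsign (hrow.symm.trans hfs)
    simpa [hc0] using hsign 0
  have hb0E : ∀ᵐ p ∂volume.restrict (Eset γ), b p.1 = 0 :=
    (ae_restrict_Eset_iff (measurableSet_eq_fun (hb.measurable.comp measurable_fst)
      measurable_const)).2 (hb0.mono fun u hu => .of_forall fun _ => hu)
  filter_upwards [hb0E] with p hp using by simp [columnAffine, hp]

end Rigidity

section Dichotomy

variable {γ : ℝ} {q : Kernel ℝ ℝ} {a b c : ℝ → ℝ} {f : ℝ × ℝ → ℝ} {B D : Set (ℝ × ℝ)}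

lemma isColumnAffine_of_ae_ae (hf : Measurable f) (hc : Measurable c)
    (ha : MeasurableUnitBounded a) (hb : MeasurableUnitBounded b)
    (h : ∀ᵐ u ∂chordMeasure γ, ∀ᵐ x ∂m1, f (chordMap γ (u, x)) = a u + b u * c x) :
    IsColumnAffine γ c f := by
  refine ⟨a, b, ha, hb, (ae_restrict_Eset_iff (measurableSet_eq_fun hf
    (measurable_columnAffine ha.measurable hb.measurable hc))).2 ?_⟩
  filter_upwards [h, ae_chordMeasure_iff.2 (.of_forall fun _ => id)] with u hu hpos
  filter_upwards [hu] with x hx using hx.trans (columnAffine_chordMap hpos x).symm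

lemma IsExchangePair.isColumnAffine_left [IsMarkovKernel q] (hc : MeasurableUnitBounded c)
    (hspan : ∀ C D, IsExchangePair q m1 C D →
      ∀ᵐ x ∂m1, C.indicator 1 x = m1.real C + (∫ y in C, c y ∂m1) * c x)
    (h : IsExchangePair (columnKernel γ q) (volume.restrict (Eset γ)) B D) :
    IsColumnAffine γ c (B.indicator 1) := by
  have hT : MeasurableSet (chordMap γ ⁻¹' B) := measurable_chordMap h.measurableSet_left
  exact isColumnAffine_of_ae_ae (measurable_one.indicator h.measurableSet_left) hc.measurable
    (.measureReal_section (μ := m1) hT) (.setIntegral_section (μ := m1) hT hc)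
    (h.column.mono fun u hu => hspan _ _ hu)

lemma IsExchangePair.isColumnAffine_right [IsMarkovKernel q] (hrev : q.IsReversible m1)
    (hc : MeasurableUnitBounded c)
    (hspan : ∀ C D, IsExchangePair q m1 C D →
      ∀ᵐ x ∂m1, C.indicator 1 x = m1.real C + (∫ y in C, c y ∂m1) * c x)
    (h : IsExchangePair (columnKernel γ q) (volume.restrict (Eset γ)) B D) :
    IsColumnAffine γ (fun x => c (-x)) (D.indicator 1) := by
  have hT : MeasurableSet {p : ℝ × ℝ | chordMap γ (p.1, -p.2) ∈ D} :=
    measurable_chordMap.comp (measurable_fst.prodMk measurable_snd.neg) h.measurableSet_right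
  refine isColumnAffine_of_ae_ae (measurable_one.indicator h.measurableSet_right)
    (hc.measurable.comp measurable_neg) (.measureReal_section (μ := m1) hT)
    (.setIntegral_section (μ := m1) hT hc) ?_
  filter_upwards [h.column] with u hu
  filter_upwards [measurePreserving_neg_m1.quasiMeasurePreserving.ae
    (hspan _ _ (hu.symm hrev))] with x hx
  have hneg : D.indicator (1 : ℝ × ℝ → ℝ) (chordMap γ (u, -(-x))) = _ := hx
  rwa [neg_neg] at hneg

lemma eventuallyConst_of_isExchangePair [IsMarkovKernel q] (hsin : Real.sin γ ≠ 0)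
    (hcos : Real.cos γ ≠ 0) (hrev : q.IsReversible m1) (herg : KErgodicMeasure m1 (fun x => q x))
    (hcol : IsExchangePair (columnKernel γ q) (volume.restrict (Eset γ)) D B)
    (hrow : IsExchangePair (columnKernel γ q) (volume.restrict (Eset γ)) (Prod.swap ⁻¹' B)
      (Prod.swap ⁻¹' D)) :
    EventuallyConst B (ae (volume.restrict (Eset γ))) := by
  obtain ⟨c, hc, hspan⟩ := exists_isBalancedSign_indicator_ae_eq hrev herg
  have hcneg : IsBalancedSign m1 fun x => c (-x) := hc.comp measurePreserving_neg_m1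
  have hf : IsColumnAffine γ (fun x => c (-x)) (B.indicator 1) :=
    hcol.isColumnAffine_right hrev hc.measurableUnitBounded hspan
  have hfs : IsColumnAffine γ c (B.indicator 1 ∘ Prod.swap) :=
    hrow.isColumnAffine_left hc.measurableUnitBounded hspan
  obtain ⟨a, ha⟩ := hf.exists_ae_eq_comp_snd hsin hcos hc hcneg.measurableUnitBounded hfs
  obtain ⟨b, hb⟩ := hfs.exists_ae_eq_comp_snd hsin hcos hcneg hc.measurableUnitBounded hf
  have hb' : ∀ᵐ p ∂volume.restrict (Eset γ), B.indicator (1 : ℝ × ℝ → ℝ) p = b p.1 :=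
    measurePreserving_swap_restrict_Eset.quasiMeasurePreserving.ae hb
  exact (eventuallyConst_of_ae_eq_comp_fst_of_ae_eq_comp_snd isOpen_Eset isPreconnected_Eset
    hb' ha).of_indicator_const one_ne_zero

end Dichotomy

theorem alternating_walk_ergodic_general (γ : ℝ) (hsin : Real.sin γ ≠ 0) (hcos : Real.cos γ ≠ 0)
    (q : Kernel ℝ ℝ) [IsMarkovKernel q] (hrev : Reversible1 q)
    (herg : KErgodicMeasure m1 (fun x => q x)) :
    KErgodicMeasure (m2 γ) (Qfun γ q) := by
  refine ⟨kInvariantMeasure_m2 herg.1, fun A hA hinv => ?_⟩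
  obtain ⟨hcol, hrow⟩ := hinv.isExchangePair_column_row hsin herg.1 hA
  have hconst : EventuallyConst (Fplus A) (ae (volume[|Eset γ])) :=
    (eventuallyConst_of_isExchangePair hsin hcos hrev.isReversible herg hcol hrow).anti
      (Measure.ae_smul_measure_le _)
  have hmeas : volume[|Eset γ] (Fminus A) = volume[|Eset γ] (Fplus A) :=
    congrArg ((volume (Eset γ))⁻¹ * ·) (hcol.measure_eq (kInvariantMeasure_columnKernel herg.1))
  have := cond_isProbabilityMeasure_of_finite (volume_Eset_ne_zero (γ := γ))
    (volume_Eset_ne_top hsin)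
  rw [m2_apply hA, hmeas, ← two_mul, ← mul_assoc,
    ENNReal.inv_mul_cancel two_ne_zero ENNReal.ofNat_ne_top, one_mul]
  exact (eventuallyConst_set'.1 hconst).imp (fun h => (measure_congr h).trans measure_empty)
    fun h => (measure_congr h).trans measure_univ

lemma cos_ne_zero_of_irrational_div_pi {γ : ℝ} (h : Irrational (γ / Real.pi)) :
    Real.cos γ ≠ 0 := by
  refine Real.cos_ne_zero_iff.2 fun k hk => h ⟨(2 * k + 1) / 2, ?_⟩
  rw [hk]
  push_cast
  field_simp

/-- if `m¹` is reversible for `q`, `γ/π` is irrational, there is an ergodic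
measure for `Q` not mutually singular with `m²`, and `m¹` is ergodic for `q`, then `m²`
is ergodic for `Q`. -/
theorem alternating_walk_ergodic (γ : ℝ) (hγ : γ ∈ Ioo 0 Real.pi)
    (q : Kernel ℝ ℝ) (hq : IsMarkovOnInterval q)
    (hrev : Reversible1 q)
    (hirr : Irrational (γ / Real.pi))
    (hmu : ∃ μ : Measure (ℝ × ℝ × ℝ), IsProbabilityMeasure μ ∧
      KErgodicMeasure μ (Qfun γ q) ∧ ¬ μ.MutuallySingular (m2 γ))
    (herg : KErgodicMeasure m1 (fun x => q x)) :
    KErgodicMeasure (m2 γ) (Qfun γ q) := by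
  have := hq.1
  exact alternating_walk_ergodic_general γ (Real.sin_pos_of_pos_of_lt_pi hγ.1 hγ.2).ne'
    (cos_ne_zero_of_irrational_div_pi hirr) q hrev herg
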